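/- arXiv:2603.21620 — 3 statements merged into one kernel-verified Lean document; each statement's English description precedes it below -/
import Mathlib

section
/- Let K be a number field, let ι : K →+* ℂ be a ring embedding, let d ≥ 2, and let f be a polynomial with coefficients in 𝓞_K of degree d. If f IS linearly conjugate over ℂ to ±T_d (i.e., there exist ε ∈ {1,−1} and a, b ∈ ℂ with a ≠ 0 such that a·(ι f)(x) + b = ε·T_d(a·x + b) for all x ∈ ℂ), then Per_inf(f,K) = Per_inf(T_d,K), where T_d is regarded as a polynomial with coefficients in 𝓞_K via the canonical map ℤ → 𝓞_K. -/
/-!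
The two proportions of periodic points agree at every prime `𝔭` not containing `d` or the leading
coefficient of `f`, hence at all primes of large norm, and so the two liminfs are equal.

Fix such a `𝔭` and let `F = 𝓞 K ⧸ 𝔭` have `q` elements. A valuation ring of `ℂ` above `𝔭` contains
the coefficients of the conjugating map `ℓ(x) = a x + b`, with `a` a unit, so `ℓ` reduces to a
conjugacy over an algebraically closed extension `E` of `F` (`perCount_reduction_eq`). The only
affine maps commuting with `±T_d` are `±x`, and only the identity does if `d` is even
(`linear_commutes_dickson`). Comparing `ℓ` with its Frobenius conjugate gives `ℓ(x)^q = σ ℓ(x)` on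
`F` with `σ = ±1`, and `σ = 1` for even `d`. So the periodic points of `f` in `F` correspond to the
periodic points `y` of `T_d` in `E` with `y^q = σ y` (`perCount_eq_ncard_twisted`); for `T_d` itself
one has `σ = 1`.

It remains to compare `σ = 1` with `σ = -1` for odd `d`. Writing `y = u + u⁻¹`, where
`T_d(y) = u^d + u^{-d}`, the condition `y^q = σ y` becomes `u^{q-1} = σ` or `u^{q+1} = σ`, and twice
the number of periodic `y` is the number of `(q-1)`-th plus the number of `(q+1)`-th roots of `σ`
that are periodic under `u ↦ u^d` (`two_mul_ncard_twisted`). For odd `d` there are periodic `n`-th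
roots of `-1`, namely those of `2`-power order, and multiplying by one shows that these numbers do
not depend on `σ` (`card_periodicRoots_neg_one`).
-/

open Polynomial NumberField Filter

/-- The number of periodic points of the evaluation map of a polynomial `g` over a
commutative ring. -/
noncomputable def perCount {F : Type*} [CommRing F] (g : F[X]) : ℕ :=
  Nat.card {α : F | ∃ m, 1 ≤ m ∧ (fun x => g.eval x)^[m] α = α}

/-- `Per_inf(f, K)`: the liminf, as `N(𝔭) → ∞`, of the proportion of periodic points of the
reduction of `f` modulo a nonzero prime ideal `𝔭` of `𝓞 K`. -/
noncomputable def perInf (K : Type*) [Field K] [NumberField K] (f : (𝓞 K)[X]) : ℝ :=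
  liminf
    (fun 𝔭 : {I : Ideal (𝓞 K) // I.IsPrime ∧ I ≠ ⊥} =>
      (perCount (f.map (Ideal.Quotient.mk 𝔭.1)) : ℝ) / (Ideal.absNorm 𝔭.1 : ℝ))
    (comap (fun 𝔭 : {I : Ideal (𝓞 K) // I.IsPrime ∧ I ≠ ⊥} => Ideal.absNorm 𝔭.1) atTop)


/-- `f` is linearly conjugate over `ℂ` to `±T_d`: there are `ε ∈ {1, -1}` and `a b : ℂ` with
`a ≠ 0` such that `a·f(x) + b = ε·T_d(a·x + b)` for all `x : ℂ`. -/
def IsLinConjChebyshev {R : Type*} [CommRing R] (ρ : R →+* ℂ) (f : R[X]) (d : ℕ) : Prop :=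
  ∃ ε a b : ℂ, (ε = 1 ∨ ε = -1) ∧ a ≠ 0 ∧
    ∀ x : ℂ, a * (f.map ρ).eval x + b = ε * (Polynomial.dickson 1 1 d : ℂ[X]).eval (a * x + b)

/-! ### Coefficients of Chebyshev polynomials -/

theorem dickson_eval_neg {R : Type*} [CommRing R] (x : R) (n : ℕ) :
    (dickson 1 (1 : R) n).eval (-x) = (-1) ^ n * (dickson 1 (1 : R) n).eval x := by
  induction n using Nat.twoStepInduction with
  | zero => simp [dickson_zero]
  | one => simp
  | more n h1 h2 => simp only [dickson_add_two, eval_sub, eval_mul, eval_X, eval_C, h1, h2]; ring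

/-- `T_{n+2} = X^{n+2} - (n+2) X^n + (terms of degree < n)`. -/
theorem dickson_expansion (R : Type*) [CommRing R] (n : ℕ) :
    ∃ r : R[X], r.degree < n ∧
      dickson 1 (1 : R) (n + 2) = X ^ (n + 2) - C ((n + 2 : ℕ) : R) * X ^ n + r := by
  induction n using Nat.twoStepInduction with
  | zero => exact ⟨0, by simp, by rw [zero_add, dickson_two]; push_cast; simp only [map_one, map_ofNat]; ring⟩
  | one =>
    refine ⟨0, by simp, ?_⟩
    rw [dickson_add_two, dickson_add_two]
    simp only [dickson_zero, dickson_one, zero_add, Nat.cast_one, Nat.cast_add, map_add, map_one,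
      Nat.cast_ofNat, map_ofNat]
    ring
  | more n h1 h2 =>
    obtain ⟨r, hr, e⟩ := h1
    obtain ⟨s, hs, e'⟩ := h2
    refine ⟨X * s + C ((n + 2 : ℕ) : R) * X ^ n - r, ?_, ?_⟩
    · rw [← mem_degreeLT] at *
      refine Submodule.sub_mem _ (Submodule.add_mem _ ?_ ?_) ?_
      · rw [mem_degreeLT, mul_comm, degree_lt_iff_coeff_zero]
        intro k hk
        obtain ⟨k, rfl⟩ : ∃ j, k = j + 1 := ⟨k - 1, by omega⟩
        rw [coeff_mul_X]
        exact (degree_lt_iff_coeff_zero _ _).1 (mem_degreeLT.1 hs) _ (by omega)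
      · rw [mem_degreeLT]
        refine (degree_C_mul_X_pow_le _ _).trans_lt ?_
        exact_mod_cast (by omega : n < n + 2)
      · exact degreeLT_mono (by omega) hr
    · rw [dickson_add_two, e, e']
      simp only [Nat.cast_add, map_add, map_one, map_natCast, Nat.cast_ofNat, map_ofNat,
        Nat.cast_one]
      ring

theorem degree_comp_linear_lt {R : Type*} [CommRing R] {r : R[X]} {n : ℕ} (hr : r.degree < n)
    (a b : R) : (r.comp (C a * X + C b)).degree < n := by
  rcases n.eq_zero_or_pos with rfl | hn
  · have : r = 0 := by simpa using hr
    simp [this]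
  · refine degree_le_natDegree.trans_lt ?_
    have h1 : r.natDegree < n := by
      rcases eq_or_ne r 0 with rfl | h0
      · simpa using hn
      · exact (natDegree_lt_iff_degree_lt h0).2 hr
    have := natDegree_comp_le (p := r) (q := C a * X + C b)
    have h2 : (C a * X + C b).natDegree ≤ 1 := natDegree_linear_le
    have h3 := Nat.mul_le_mul_left r.natDegree h2
    exact_mod_cast (by omega)

theorem coeff_linear_pow {K : Type*} [Field K] {a : K} (ha : a ≠ 0) (b : K) (n k : ℕ) :
    ((C a * X + C b) ^ n).coeff k = a ^ n * ((b / a) ^ (n - k) * n.choose k) := by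
  have : (C a * X + C b : K[X]) = C a * (X + C (b / a)) := by
    rw [mul_add, ← C_mul, mul_div_cancel₀ _ ha]
  rw [this, mul_pow, ← C_pow, coeff_C_mul, coeff_X_add_C_pow]

theorem coeff_dickson_comp_linear {K : Type*} [Field K] {a : K} (ha : a ≠ 0) (b : K) (n : ℕ) :
    ((dickson 1 (1 : K) (n + 2)).comp (C a * X + C b)).coeff (n + 2) = a ^ (n + 2) ∧
    ((dickson 1 (1 : K) (n + 2)).comp (C a * X + C b)).coeff (n + 1)
      = (n + 2 : ℕ) * a ^ (n + 1) * b ∧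
    (b = 0 → ((dickson 1 (1 : K) (n + 2)).comp (C a * X + C b)).coeff n
      = - (n + 2 : ℕ) * a ^ n) := by
  obtain ⟨r, hr, e⟩ := dickson_expansion K n
  have hr' := (degree_lt_iff_coeff_zero _ _).1 (degree_comp_linear_lt hr a b)
  have key : ∀ k, n ≤ k → ((dickson 1 (1 : K) (n + 2)).comp (C a * X + C b)).coeff k =
      a ^ (n + 2) * ((b / a) ^ (n + 2 - k) * (n + 2).choose k) -
        (n + 2 : ℕ) * (a ^ n * ((b / a) ^ (n - k) * n.choose k)) := by
    intro k hk
    rw [e]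
    simp only [add_comp, sub_comp, mul_comp, pow_comp, X_comp, C_comp, coeff_add, coeff_sub,
      coeff_C_mul, coeff_linear_pow ha, hr' k hk, add_zero]
  refine ⟨?_, ?_, ?_⟩
  · rw [key _ (by omega), Nat.choose_eq_zero_of_lt (show n < n + 2 by omega)]
    simp
  · rw [key _ (by omega), Nat.choose_eq_zero_of_lt (show n < n + 1 by omega),
      Nat.choose_succ_self_right, show n + 2 - (n + 1) = 1 by omega]
    push_cast
    field_simp
    ring
  · rintro rfl
    rw [key _ le_rfl, show n + 2 - n = 2 by omega]
    simp only [zero_div, Nat.sub_self, Nat.choose_self]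
    ring

/-- An affine map `y ↦ α y + β` carrying `T_d` to `α T_d + γ` (in particular one commuting with
`±T_d`) is `y ↦ ±y`, and it is the identity when `d` is even. Seen on the coefficients of degrees
`d`, `d - 1` and `d - 2`. -/
theorem linear_commutes_dickson {K : Type*} [Field K] {α β γ : K} (hα : α ≠ 0) {d : ℕ}
    (hd : 2 ≤ d) (hd0 : (d : K) ≠ 0)
    (h : (dickson 1 (1 : K) d).comp (C α * X + C β) = C α * dickson 1 (1 : K) d + C γ) :
    β = 0 ∧ α ^ 2 = 1 ∧ (Even d → α = 1) := by
  obtain ⟨n, rfl⟩ : ∃ n, d = n + 2 := ⟨d - 2, by omega⟩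
  obtain ⟨c2, c1, c0⟩ := coeff_dickson_comp_linear hα β n
  obtain ⟨t2, t1, t0⟩ := coeff_dickson_comp_linear (one_ne_zero (α := K)) 0 n
  simp only [map_one, one_mul, map_zero, add_zero, comp_X, one_pow, mul_one, mul_zero,
    forall_true_left] at t2 t1 t0
  have e : ∀ k, k ≠ 0 → ((dickson 1 (1 : K) (n + 2)).comp (C α * X + C β)).coeff k =
      α * (dickson 1 (1 : K) (n + 2)).coeff k := by
    intro k hk
    rw [h, coeff_add, coeff_C_mul, coeff_C_of_ne_zero hk, add_zero]
  have h1 := e (n + 1) (by omega)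
  have h2 := e (n + 2) (by omega)
  rw [c1, t1, mul_zero] at h1
  rw [c2, t2, mul_one] at h2
  have hβ : β = 0 := by
    simpa [hα, -Nat.cast_add] using (mul_eq_zero.1 h1).resolve_left
      (mul_ne_zero hd0 (pow_ne_zero _ hα))
  have hsq : α ^ 2 = 1 := by
    rcases n.eq_zero_or_pos with rfl | hn
    · have : α * α = α * 1 := by linear_combination h2
      rw [mul_left_cancel₀ hα this, one_pow]
    · have h3 := e n hn.ne'
      rw [c0 hβ, t0] at h3
      have h4 : α ^ n = α := mul_left_cancel₀ hd0 (by linear_combination -h3)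
      rw [pow_add, h4] at h2
      exact mul_left_cancel₀ hα (h2.trans (mul_one α).symm)
  refine ⟨hβ, hsq, fun ⟨k, hk⟩ => ?_⟩
  rw [hk, ← two_mul, pow_mul, hsq, one_pow] at h2
  exact h2.symm

/-! ### Periodic points of Chebyshev polynomials via `x = u + u⁻¹` -/

theorem mem_range_of_pow_card {F E : Type*} [Field F] [Finite F] [Field E] [Algebra F E] {x : E}
    (h : x ^ Nat.card F = x) : ∃ y, algebraMap F E y = x := by
  classical
  have := Fintype.ofFinite F
  rw [Nat.card_eq_fintype_card] at h
  have h0 : (X ^ Fintype.card F - X : E[X]) ≠ 0 :=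
    FiniteField.X_pow_card_sub_X_ne_zero E Fintype.one_lt_card
  have hsub : Finset.univ.image (algebraMap F E) ⊆ (X ^ Fintype.card F - X : E[X]).roots.toFinset := by
    intro z hz
    obtain ⟨y, -, rfl⟩ := Finset.mem_image.1 hz
    simp [h0, ← _root_.map_pow, FiniteField.pow_card]
  have heq := Finset.eq_of_subset_of_card_le hsub (by
    rw [Finset.card_image_of_injective _ (algebraMap F E).injective, Finset.card_univ]
    refine (Multiset.toFinset_card_le _).trans ((card_roots' _).trans ?_)
    rw [FiniteField.X_pow_card_sub_X_natDegree_eq E Fintype.one_lt_card])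
  have hx : x ∈ (X ^ Fintype.card F - X : E[X]).roots.toFinset := by simp [h0, h]
  rw [← heq] at hx
  simpa using hx

theorem mem_periodicPts_iff_of_semiconj {A B : Type*} {h : A → B} (hi : Function.Injective h)
    {f : A → A} {g : B → B} (hs : Function.Semiconj h f g) (x : A) :
    x ∈ Function.periodicPts f ↔ h x ∈ Function.periodicPts g := by
  simp only [Function.mem_periodicPts, Function.IsPeriodicPt, Function.IsFixedPt]
  refine exists_congr fun n => and_congr_right fun _ => ?_
  rw [← (hs.iterate_right n).eq, hi.eq_iff]

theorem dickson_iterate {R : Type*} [CommRing R] (d : ℕ) {u v : R} (h : u * v = 1) (k : ℕ) :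
    (fun x => (dickson 1 (1 : R) d).eval x)^[k] (u + v) = u ^ d ^ k + v ^ d ^ k := by
  induction k with
  | zero => simp
  | succ k ih =>
    rw [Function.iterate_succ_apply', ih]
    rw [dickson_one_one_eval_add_inv _ _ (by rw [← mul_pow, h, one_pow]), ← pow_mul, ← pow_mul,
      pow_succ]

theorem add_inv_eq_iff {K : Type*} [Field K] {u v : K} (hu : u ≠ 0) (hv : v ≠ 0) :
    v + v⁻¹ = u + u⁻¹ ↔ v = u ∨ v = u⁻¹ := by
  constructor
  · intro h
    have : (v - u) * (v - u⁻¹) = 0 := by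
      field_simp at h ⊢
      linear_combination h
    rcases mul_eq_zero.1 this with h | h
    · exact .inl (sub_eq_zero.1 h)
    · exact .inr (sub_eq_zero.1 h)
  · rintro (rfl | rfl)
    · rfl
    · rw [inv_inv, add_comm]

theorem mem_periodicPts_dickson_iff {K : Type*} [Field K] (d : ℕ) {u : K} (hu : u ≠ 0) :
    u + u⁻¹ ∈ Function.periodicPts (fun x => (dickson 1 (1 : K) d).eval x) ↔
      u ∈ Function.periodicPts (fun x : K => x ^ d) := by
  simp only [Function.mem_periodicPts, Function.IsPeriodicPt, Function.IsFixedPt,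
    dickson_iterate d (mul_inv_cancel₀ hu), pow_iterate]
  constructor
  · rintro ⟨n, hn, h⟩
    rw [inv_pow, add_inv_eq_iff hu (pow_ne_zero _ hu)] at h
    rcases h with h | h
    · exact ⟨n, hn, h⟩
    · refine ⟨n + n, by omega, ?_⟩
      rw [pow_add, pow_mul, h, inv_pow, h, inv_inv]
  · rintro ⟨n, hn, h⟩
    exact ⟨n, hn, by rw [inv_pow, h]⟩

theorem mul_mem_periodicPts_pow {K : Type*} [CommMonoid K] (d : ℕ) {u v : K}
    (hu : u ∈ Function.periodicPts (fun x : K => x ^ d))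
    (hv : v ∈ Function.periodicPts (fun x : K => x ^ d)) :
    u * v ∈ Function.periodicPts (fun x : K => x ^ d) := by
  obtain ⟨n, hn, h⟩ := hu
  obtain ⟨m, hm, h'⟩ := hv
  refine ⟨n * m, Nat.mul_pos hn hm, ?_⟩
  have h1 := h.mul_const m
  have h2 := h'.const_mul n
  simp only [Function.IsPeriodicPt, Function.IsFixedPt, pow_iterate] at *
  rw [mul_pow, h1, h2]

theorem inv_mem_periodicPts_pow {K : Type*} [Field K] (d : ℕ) {u : K}
    (hu : u ∈ Function.periodicPts (fun x : K => x ^ d)) :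
    u⁻¹ ∈ Function.periodicPts (fun x : K => x ^ d) := by
  obtain ⟨n, hn, h⟩ := hu
  refine ⟨n, hn, ?_⟩
  simp only [Function.IsPeriodicPt, Function.IsFixedPt, pow_iterate] at *
  rw [inv_pow, h]

/-- For `d` odd, `-1` has an `n`-th root of `2`-power order, and such a root is periodic under
`x ↦ x ^ d`. -/
theorem exists_pow_eq_neg_one {K : Type*} [Field K] [IsAlgClosed K] {d : ℕ} (hd : Odd d) {n : ℕ}
    (hn : n ≠ 0) : ∃ ζ : K, ζ ^ n = -1 ∧ ζ ∈ Function.periodicPts (fun x : K => x ^ d) := by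
  obtain ⟨k, m, hm, hnm⟩ := Nat.exists_eq_two_pow_mul_odd hn
  obtain ⟨ξ, hξ⟩ := IsAlgClosed.exists_pow_nat_eq (-1 : K) (Nat.pos_of_ne_zero hn)
  have h1 : (ξ ^ m) ^ 2 ^ (k + 1) = 1 := by
    rw [← pow_mul, show m * 2 ^ (k + 1) = n * 2 by rw [hnm]; ring, pow_mul, hξ]; norm_num
  refine ⟨ξ ^ m, ?_, Nat.totient (2 ^ (k + 1)), Nat.totient_pos.2 (by positivity), ?_⟩
  · rw [pow_right_comm, hξ, hm.neg_one_pow]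
  · simp only [Function.IsPeriodicPt, Function.IsFixedPt, pow_iterate]
    have h2 : d ^ Nat.totient (2 ^ (k + 1)) ≡ 1 [MOD 2 ^ (k + 1)] :=
      Nat.ModEq.pow_totient (Nat.Coprime.pow_right _ (Nat.coprime_two_right.2 hd))
    simpa using pow_eq_pow_of_modEq h2 h1

open Classical in
/-- The finite set of `n`-th roots of `σ` in `K` that are periodic under `x ↦ x ^ d`. The set is
meaningful for `n > 0` only. -/
noncomputable def periodicRoots (K : Type*) [Field K] (d n : ℕ) (σ : K) : Finset K :=
  (nthRoots n σ).toFinset.filter fun u => u ∈ Function.periodicPts (fun x : K => x ^ d)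

theorem mem_periodicRoots {K : Type*} [Field K] {d n : ℕ} (hn : 0 < n) {σ u : K} :
    u ∈ periodicRoots K d n σ ↔
      u ^ n = σ ∧ u ∈ Function.periodicPts (fun x : K => x ^ d) := by
  classical
  simp [periodicRoots, mem_nthRoots hn]

/-- Multiplication by a periodic `n`-th root of `-1` matches the periodic `n`-th roots of `1` with
those of `-1`. -/
theorem card_periodicRoots_neg_one {K : Type*} [Field K] [IsAlgClosed K] {d : ℕ} (hd : Odd d)
    {n : ℕ} (hn : 0 < n) :
    (periodicRoots K d n (-1)).card = (periodicRoots K d n 1).card := by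
  obtain ⟨ζ, hζ, hp⟩ := exists_pow_eq_neg_one (K := K) hd hn.ne'
  have h0 : ζ ≠ 0 := by
    rintro rfl
    rw [zero_pow hn.ne'] at hζ
    exact one_ne_zero (neg_eq_zero.1 hζ.symm)
  refine Finset.card_nbij' (fun u => ζ⁻¹ * u) (fun u => ζ * u) ?_ ?_ ?_ ?_
  · intro u hu
    rw [Finset.mem_coe, mem_periodicRoots hn] at *
    exact ⟨by rw [mul_pow, inv_pow, hζ, hu.1]; norm_num,
      mul_mem_periodicPts_pow d (inv_mem_periodicPts_pow d hp) hu.2⟩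
  · intro u hu
    rw [Finset.mem_coe, mem_periodicRoots hn] at *
    exact ⟨by rw [mul_pow, hζ, hu.1, mul_one], mul_mem_periodicPts_pow d hp hu.2⟩
  · intro u _; simp [h0]
  · intro u _; simp [h0]

theorem exists_add_inv {K : Type*} [Field K] [IsAlgClosed K] (x : K) :
    ∃ u : K, u ≠ 0 ∧ u + u⁻¹ = x := by
  obtain ⟨u, hu⟩ := IsAlgClosed.exists_root (X ^ 2 - C x * X + 1 : K[X])
    (by
    rw [show (X ^ 2 - C x * X + 1 : K[X]) = C 1 * X ^ 2 + C (-x) * X + C 1 by simp; ring,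
      degree_quadratic one_ne_zero]
    decide)
  have h : u ^ 2 - x * u + 1 = 0 := by simpa using hu
  have h0 : u ≠ 0 := by rintro rfl; simp at h
  refine ⟨u, h0, ?_⟩
  field_simp
  linear_combination h

/-- With `q = m + 1` and `σ = ±1`, the map `u ↦ u + u⁻¹` from the disjoint union of the `(q - 1)`-th
and `(q + 1)`-th roots of `σ` to `{y | y ^ q = σ y}` is exactly two-to-one, and it respects
periodicity. The hypothesis `hadd` holds for the Frobenius `x ↦ x ^ q`. -/
theorem two_mul_ncard_twisted {K : Type*} [Field K] [IsAlgClosed K] (d : ℕ) {m : ℕ} (hm : 0 < m)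
    (hadd : ∀ x y : K, (x + y) ^ (m + 1) = x ^ (m + 1) + y ^ (m + 1)) {σ : K} (hσ : σ ^ 2 = 1) :
    2 * {y : K | y ^ (m + 1) = σ * y ∧
        y ∈ Function.periodicPts (fun x => (dickson 1 (1 : K) d).eval x)}.ncard =
      (periodicRoots K d m σ).card + (periodicRoots K d (m + 2) σ).card := by
  classical
  set W₁ := periodicRoots K d m σ with hW₁
  set W₂ := periodicRoots K d (m + 2) σ with hW₂
  have hσ0 : σ ≠ 0 := by rintro rfl; simp at hσ
  have m1 : ∀ u, u ∈ W₁ ↔ u ^ m = σ ∧ u ∈ Function.periodicPts (fun x : K => x ^ d) :=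
    fun u => mem_periodicRoots hm
  have m2 : ∀ u, u ∈ W₂ ↔ u ^ (m + 2) = σ ∧ u ∈ Function.periodicPts (fun x : K => x ^ d) :=
    fun u => mem_periodicRoots (by omega)
  have hσi : σ⁻¹ = σ := inv_eq_of_mul_eq_one_left (by rw [← sq, hσ])
  have z1 : ∀ u ∈ W₁, u ≠ 0 := by
    rintro u hu rfl
    rw [m1, zero_pow hm.ne'] at hu
    exact hσ0 hu.1.symm
  have z2 : ∀ u ∈ W₂, u ≠ 0 := by
    rintro u hu rfl
    rw [m2, zero_pow (by omega)] at hu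
    exact hσ0 hu.1.symm
  have i1 : ∀ u ∈ W₁, u⁻¹ ∈ W₁ := fun u hu => by
    rw [m1] at *
    exact ⟨by rw [inv_pow, hu.1, hσi], inv_mem_periodicPts_pow d hu.2⟩
  have i2 : ∀ u ∈ W₂, u⁻¹ ∈ W₂ := fun u hu => by
    rw [m2] at *
    exact ⟨by rw [inv_pow, hu.1, hσi], inv_mem_periodicPts_pow d hu.2⟩
  set P : Finset K := (W₁ ∪ W₂).image fun u => u + u⁻¹ with hP
  have hset : {y : K | y ^ (m + 1) = σ * y ∧
        y ∈ Function.periodicPts (fun x => (dickson 1 (1 : K) d).eval x)} = (P : Set K) := by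
    ext y
    simp only [Set.mem_ofPred_eq, hP, Finset.coe_image, Set.mem_image, Finset.mem_coe,
      Finset.mem_union]
    constructor
    · rintro ⟨h1, h2⟩
      obtain ⟨u, hu, rfl⟩ := exists_add_inv y
      rw [mem_periodicPts_dickson_iff d hu] at h2
      refine ⟨u, ?_, rfl⟩
      rw [m1, m2]
      rw [hadd, inv_pow] at h1
      -- `u ^ q` satisfies `u ^ q + (u ^ q)⁻¹ = σ u + (σ u)⁻¹`, so it is `σ u` or its inverse.
      have : (u ^ m - σ) * (u ^ (m + 2) - σ) = 0 := by
        have hum : u ^ m ≠ 0 := pow_ne_zero _ hu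
        rw [pow_succ] at h1
        rw [pow_add]
        field_simp at h1
        linear_combination h1 + hσ
      rcases mul_eq_zero.1 this with h | h
      · exact .inl ⟨sub_eq_zero.1 h, h2⟩
      · exact .inr ⟨sub_eq_zero.1 h, h2⟩
    · rintro ⟨u, hu, rfl⟩
      have hu0 : u ≠ 0 := hu.elim (z1 u) (z2 u)
      rw [mem_periodicPts_dickson_iff d hu0, hadd, inv_pow]
      rw [m1, m2] at hu
      refine ⟨?_, hu.elim And.right And.right⟩
      rcases hu with hu | hu
      · rw [pow_succ, hu.1, mul_inv, hσi]; ring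
      · have : u ^ (m + 1) = σ * u⁻¹ := by
          rw [← hu.1, pow_succ u (m + 1), mul_inv_cancel_right₀ hu0]
        rw [this, mul_inv, hσi, inv_inv]; ring
  rw [hset, Set.ncard_coe_finset]
  rw [Finset.card_eq_sum_card_fiberwise (s := W₁) (t := P) (f := fun u => u + u⁻¹)
      (fun u hu => Finset.mem_coe.2 (Finset.mem_image_of_mem _ (Finset.mem_union_left _ hu))),
    Finset.card_eq_sum_card_fiberwise (s := W₂) (t := P) (f := fun u => u + u⁻¹)
      (fun u hu => Finset.mem_coe.2 (Finset.mem_image_of_mem _ (Finset.mem_union_right _ hu))),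
    ← Finset.sum_add_distrib, mul_comm, ← smul_eq_mul, ← Finset.sum_const]
  refine Finset.sum_congr rfl fun y hy => ?_
  obtain ⟨u, hu, rfl⟩ := Finset.mem_image.1 hy
  rw [Finset.mem_union] at hu
  have hu0 : u ≠ 0 := hu.elim (z1 u) (z2 u)
  have fib : ∀ W : Finset K, (∀ w ∈ W, w ≠ 0) → (∀ w ∈ W, w⁻¹ ∈ W) →
      W.filter (fun w => w + w⁻¹ = u + u⁻¹) = if u ∈ W then {u, u⁻¹} else ∅ := by
    intro W hz hi
    split_ifs with hW
    · ext w
      simp only [Finset.mem_filter, Finset.mem_insert, Finset.mem_singleton]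
      constructor
      · exact fun h => (add_inv_eq_iff hu0 (hz w h.1)).1 h.2
      · rintro (rfl | rfl)
        · exact ⟨hW, rfl⟩
        · exact ⟨hi _ hW, by rw [inv_inv, add_comm]⟩
    · refine Finset.filter_eq_empty_iff.2 fun w hw h => hW ?_
      rcases (add_inv_eq_iff hu0 (hz w hw)).1 h with rfl | rfl
      · exact hw
      · simpa using hi _ hw
  rw [fib W₁ z1 i1, fib W₂ z2 i2]
  -- When `u = u⁻¹` the fibre meets both sets of roots once; otherwise it is `{u, u⁻¹}`, contained in
  -- exactly one of them.
  by_cases huu : u = u⁻¹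
  · have hsq : u ^ 2 = 1 := by rw [sq]; nth_rewrite 2 [huu]; exact mul_inv_cancel₀ hu0
    have h12 : u ∈ W₁ ↔ u ∈ W₂ := by rw [m1, m2, pow_add, hsq, mul_one]
    have h1 : u ∈ W₁ := by tauto
    have h2 : u ∈ W₂ := by tauto
    rw [if_pos h1, if_pos h2, ← huu]
    simp
  · have hn : ¬ (u ∈ W₁ ∧ u ∈ W₂) := by
      rintro ⟨h1, h2⟩
      rw [m1] at h1
      rw [m2, pow_add, h1.1] at h2
      refine huu (eq_inv_of_mul_eq_one_left ?_)
      rw [← sq]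
      exact mul_left_cancel₀ hσ0 (h2.1.trans (mul_one σ).symm)
    by_cases h1 : u ∈ W₁
    · rw [if_pos h1, if_neg (fun h => hn ⟨h1, h⟩), Finset.card_pair huu]; rfl
    · rw [if_neg h1, if_pos (hu.resolve_left h1), Finset.card_pair huu]; rfl

theorem ncard_twisted_eq {K : Type*} [Field K] [IsAlgClosed K] {d : ℕ} (hd : Odd d) {m : ℕ}
    (hm : 0 < m) (hadd : ∀ x y : K, (x + y) ^ (m + 1) = x ^ (m + 1) + y ^ (m + 1)) :
    {y : K | y ^ (m + 1) = -1 * y ∧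
        y ∈ Function.periodicPts (fun x => (dickson 1 (1 : K) d).eval x)}.ncard =
    {y : K | y ^ (m + 1) = 1 * y ∧
        y ∈ Function.periodicPts (fun x => (dickson 1 (1 : K) d).eval x)}.ncard := by
  have h1 := two_mul_ncard_twisted d hm hadd (σ := (-1 : K)) (by norm_num)
  have h2 := two_mul_ncard_twisted d hm hadd (σ := (1 : K)) (by norm_num)
  rw [card_periodicRoots_neg_one hd hm, card_periodicRoots_neg_one hd (by omega)] at h1
  omega

/-! ### Comparison over a finite field -/

theorem periodicPts_neg_of_odd {R : Type*} [CommRing R] {g : R → R} (hg : ∀ x, g (-x) = -g x) :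
    Function.periodicPts (fun x => -g x) = Function.periodicPts g := by
  have key : ∀ {g : R → R}, (∀ x, g (-x) = -g x) → ∀ x, x ∈ Function.periodicPts g →
      x ∈ Function.periodicPts (fun x => -g x) := by
    rintro g hg x ⟨n, hn, h⟩
    refine ⟨n * 2, by omega, ?_⟩
    have hc : Function.Commute (fun x : R => -x) g := fun x => (hg x).symm
    have := hc.comp_iterate (n * 2)
    have h2 : (fun x : R => -x)^[n * 2] = id := by
      rw [mul_comm, Function.iterate_mul]
      convert Function.iterate_id n using 2
      ext x; simp
    rw [h2, Function.id_comp] at this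
    have h3 := h.mul_const 2
    rw [Function.IsPeriodicPt, ← this] at h3
    exact h3
  ext x
  refine ⟨fun h => ?_, key hg x⟩
  simpa using key (g := fun x => -g x) (fun x => by rw [hg]) x h

theorem perCount_eq_ncard {F : Type*} [Field F] (g : F[X]) :
    perCount g = (Function.periodicPts fun x => g.eval x).ncard := by
  rfl

/-- Let `ℓ(x) = a x + b` conjugate `f` to `±T_d` over an extension of the field `F` with `q` elements.
The Frobenius conjugate of `ℓ` also does, so it equals `σ ℓ` with `σ = ±1`. Hence `ℓ` maps `F`
onto `{y | y ^ q = σ y}`, and the periodic points of `f` onto those of `T_d` in that set. -/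
theorem perCount_eq_ncard_twisted {F E : Type*} [Field F] [Finite F] [Field E] [IsAlgClosed E]
    [Algebra F E] {d : ℕ} (hd : 2 ≤ d) (hd0 : (d : F) ≠ 0) (f : F[X]) {ε a b : E}
    (hε : ε = 1 ∨ (ε = -1 ∧ Odd d)) (ha : a ≠ 0)
    (h : C a * f.map (algebraMap F E) + C b
      = C ε * (dickson 1 (1 : E) d).comp (C a * X + C b)) :
    ∃ σ : E, a ^ Nat.card F = σ * a ∧ σ ^ 2 = 1 ∧ (Even d → σ = 1) ∧
      perCount f = {y : E | y ^ Nat.card F = σ * y ∧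
        y ∈ Function.periodicPts (fun x => (dickson 1 (1 : E) d).eval x)}.ncard := by
  have := Fintype.ofFinite F
  have hε2 : ε * ε = 1 := by rcases hε with rfl | ⟨rfl, -⟩ <;> norm_num
  set φ : E →ₐ[F] E := FiniteField.frobeniusAlgHom F E with hφ
  have hφx : ∀ x, φ x = x ^ Nat.card F := fun x => by
    rw [Nat.card_eq_fintype_card, hφ, FiniteField.coe_frobeniusAlgHom]
  have hdE : (d : E) ≠ 0 := by
    rw [← map_natCast (algebraMap F E)]
    exact fun h0 => hd0 ((algebraMap F E).injective (h0.trans (map_zero _).symm))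
  have hφε : φ ε = ε := by rcases hε with rfl | ⟨rfl, -⟩ <;> simp
  have ha' : φ a ≠ 0 := by simpa using ha
  -- The Frobenius fixes the coefficients of `f`, so it turns the conjugacy into another one.
  have h' : C (φ a) * f.map (algebraMap F E) + C (φ b)
      = C ε * (dickson 1 (1 : E) d).comp (C (φ a) * X + C (φ b)) := by
    have := congrArg (Polynomial.map (φ : E →+* E)) h
    simpa [Polynomial.map_comp, map_dickson, Polynomial.map_map, hφε] using this
  have hcomm := linear_commutes_dickson (α := φ a / a) (β := φ b - φ a / a * b)
    (γ := ε * (φ b - φ a / a * b)) (div_ne_zero ha' ha) hd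
    hdE (by
      refine Polynomial.funext fun y => ?_
      have e := congrArg (Polynomial.eval ((y - b) / a)) h
      have e' := congrArg (Polynomial.eval ((y - b) / a)) h'
      simp only [eval_add, eval_mul, eval_C, eval_comp, eval_X] at e e' ⊢
      rw [show a * ((y - b) / a) + b = y by field_simp; ring] at e
      rw [show φ a * ((y - b) / a) + φ b = φ a / a * y + (φ b - φ a / a * b) by
        field_simp; ring] at e'
      generalize eval ((y - b) / a) (f.map (algebraMap F E)) = t at e e'
      generalize eval (φ a / a * y + (φ b - φ a / a * b)) (dickson 1 1 d) = s at e' ⊢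
      generalize eval y (dickson 1 1 d) = r at e ⊢
      have hs : s = ε * (φ a * t + φ b) := by rw [e', ← mul_assoc, hε2, one_mul]
      have hr : r = ε * (a * t + b) := by rw [e, ← mul_assoc, hε2, one_mul]
      rw [hs, hr]
      field_simp
      ring)
  obtain ⟨hb, hsq, heven⟩ := hcomm
  set σ := φ a / a with hσ
  have haσ : φ a = σ * a := by rw [hσ]; field_simp
  have hbσ : φ b = σ * b := sub_eq_zero.1 hb
  have hσ0 : σ ≠ 0 := by rintro h0; rw [h0] at hsq; simp at hsq
  refine ⟨σ, by rw [← hφx, haσ], hsq, heven, ?_⟩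
  have hinj : Function.Injective (fun x : F => a * algebraMap F E x + b) := fun x y hxy =>
    (algebraMap F E).injective (mul_left_cancel₀ ha (add_right_cancel hxy))
  have hsemi : Function.Semiconj (fun x : F => a * algebraMap F E x + b) (fun x => f.eval x)
      (fun y => ε * (dickson 1 (1 : E) d).eval y) := fun x => by
    have e := congrArg (Polynomial.eval (algebraMap F E x)) h
    simpa [eval_comp, eval_map_algebraMap, aeval_algebraMap_apply] using e
  have hper : Function.periodicPts (fun y => ε * (dickson 1 (1 : E) d).eval y) =
      Function.periodicPts (fun y => (dickson 1 (1 : E) d).eval y) := by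
    rcases hε with rfl | ⟨rfl, hodd⟩
    · simp only [one_mul]
    · simp only [neg_mul, one_mul]
      exact periodicPts_neg_of_odd fun x => by
        rw [dickson_eval_neg, hodd.neg_one_pow, neg_one_mul]
  rw [perCount_eq_ncard, ← Set.ncard_image_of_injective _ hinj]
  congr 1
  ext y
  simp only [Set.mem_image, Set.mem_ofPred_eq]
  constructor
  · rintro ⟨x, hx, rfl⟩
    rw [mem_periodicPts_iff_of_semiconj hinj hsemi, hper] at hx
    refine ⟨?_, hx⟩
    rw [← hφx, map_add, map_mul, haσ, hbσ, AlgHom.commutes]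
    ring
  · rintro ⟨h1, h2⟩
    obtain ⟨x, hx⟩ := mem_range_of_pow_card (F := F) (x := (y - b) / a) (by
      rw [← hφx] at h1 ⊢
      rw [map_div₀, map_sub, h1, haσ, hbσ]
      field_simp)
    have hy : a * algebraMap F E x + b = y := by rw [hx]; field_simp; ring
    refine ⟨x, ?_, hy⟩
    rw [mem_periodicPts_iff_of_semiconj hinj hsemi, hper]
    simpa only [hy] using h2

theorem perCount_eq_perCount_dickson {F E : Type*} [Field F] [Finite F] [Field E] [IsAlgClosed E]
    [Algebra F E] {d : ℕ} (hd : 2 ≤ d) (hd0 : (d : F) ≠ 0) (f : F[X]) {ε a b : E}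
    (hε : ε = 1 ∨ (ε = -1 ∧ Odd d)) (ha : a ≠ 0)
    (h : C a * f.map (algebraMap F E) + C b
      = C ε * (dickson 1 (1 : E) d).comp (C a * X + C b)) :
    perCount f = perCount (dickson 1 (1 : F) d) := by
  have := Fintype.ofFinite F
  obtain ⟨σ, -, hσ, heven, hf⟩ := perCount_eq_ncard_twisted hd hd0 f hε ha h
  obtain ⟨τ, hτ, -, -, hT⟩ := perCount_eq_ncard_twisted (E := E) hd hd0 (dickson 1 (1 : F) d)
    (ε := 1) (a := 1) (b := 0) (.inl rfl) one_ne_zero (by simp [map_dickson])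
  obtain rfl : τ = 1 := by simpa using hτ.symm
  rw [hf, hT]
  rcases sq_eq_sq_iff_eq_or_eq_neg.1 (hσ.trans (one_pow 2).symm) with rfl | rfl
  · rfl
  · rcases Nat.even_or_odd d with hd' | hd'
    · rw [heven hd']
    · obtain ⟨m, hm⟩ : ∃ m, Nat.card F = m + 1 := ⟨Nat.card F - 1, by
        have := Nat.card_pos (α := F); omega⟩
      rw [hm]
      refine ncard_twisted_eq hd' ?_ ?_
      · have := Finite.one_lt_card (α := F); omega
      · intro x y
        have := map_add (FiniteField.frobeniusAlgHom F E) x y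
        rwa [FiniteField.coe_frobeniusAlgHom, ← Nat.card_eq_fintype_card, hm] at this

/-! ### Reduction of a conjugacy over `ℂ` -/

/-- A conjugacy over `ℂ` between `f` and `±T_d` reduces modulo any `p` not containing `d` or the
leading coefficient of `f`. The coefficients of degrees `d` and `d - 1` show that `a` is a unit and
`b` is integral at every valuation of `ℂ` above `p`. -/
theorem perCount_reduction_eq {R : Type*} [CommRing R] {j : R →+* ℂ} (hj : Function.Injective j)
    {d : ℕ} (hd : 2 ≤ d) (f : R[X]) {e : ℤ} (he : e = 1 ∨ (e = -1 ∧ Odd d)) {a b : ℂ} (ha : a ≠ 0)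
    (h : C a * f.map j + C b = C (e : ℂ) * (dickson 1 (1 : ℂ) d).comp (C a * X + C b))
    (p : Ideal R) [p.IsMaximal] [Finite (R ⧸ p)] (hp : (d : R) * f.coeff d ∉ p) :
    perCount (f.map (Ideal.Quotient.mk p)) = perCount (dickson 1 (1 : R ⧸ p) d) := by
  obtain ⟨n, rfl⟩ : ∃ n, d = n + 2 := ⟨d - 2, by omega⟩
  -- A valuation ring of `ℂ` whose maximal ideal lies over `p`.
  obtain ⟨V, hV, hpV⟩ := Ideal.image_subset_nonunits_valuationSubring
    (p.map j.rangeRestrict) (by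
      rw [Ne, Ideal.eq_top_iff_one, Ideal.mem_map_iff_of_surjective _ j.rangeRestrict_surjective]
      rintro ⟨x, hx, hx1⟩
      have : j x = j 1 := by simpa using congrArg Subtype.val hx1
      rw [hj this] at hx
      exact (Ideal.ne_top_iff_one p).1 (Ideal.IsMaximal.ne_top ‹_›) hx)
  have hjV : ∀ x, j x ∈ V := fun x => hV ⟨x, rfl⟩
  let E := AlgebraicClosure (IsLocalRing.ResidueField V)
  let π : V →+* E := (algebraMap (IsLocalRing.ResidueField V) E).comp (IsLocalRing.residue V)
  let jV : R →+* V := j.codRestrict V hjV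
  have hπ0 : ∀ x : V, π x = 0 ↔ V.valuation x < 1 := fun x => by
    rw [← ValuationSubring.mem_nonunits_iff, ValuationSubring.coe_mem_nonunits_iff,
      ← IsLocalRing.residue_eq_zero_iff]
    exact map_eq_zero_iff _ (algebraMap (IsLocalRing.ResidueField V) E).injective
  have hker : ∀ x ∈ p, (π.comp jV) x = 0 := fun x hx =>
    (hπ0 _).2 ((ValuationSubring.mem_nonunits_iff _).1
      (hpV ⟨j.rangeRestrict x, Ideal.mem_map_of_mem _ hx, rfl⟩))
  let : Field (R ⧸ p) := Ideal.Quotient.field p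
  let : Algebra (R ⧸ p) E := (Ideal.Quotient.lift p (π.comp jV) hker).toAlgebra
  have hmk : (algebraMap (R ⧸ p) E).comp (Ideal.Quotient.mk p) = π.comp jV :=
    Ideal.Quotient.lift_comp_mk p _ hker
  have hunit : ∀ x, x ∉ p → V.valuation (j x) = 1 := by
    intro x hx
    refine le_antisymm ((V.valuation_le_one_iff _).2 (hjV x)) (not_lt.1 fun hlt => hx ?_)
    have h1 : π (jV x) = 0 := (hπ0 (jV x)).2 hlt
    rw [← RingHom.comp_apply, ← hmk, RingHom.comp_apply, map_eq_zero] at h1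
    exact Ideal.Quotient.eq_zero_iff_mem.1 h1
  have hl : f.coeff (n + 2) ∉ p := fun h0 => hp (Ideal.mul_mem_left _ _ h0)
  have he2 : (e : ℂ) * e = 1 := by rcases he with rfl | ⟨rfl, -⟩ <;> norm_num
  obtain ⟨c2, c1, -⟩ := coeff_dickson_comp_linear ha b n
  have e2 := congrArg (fun q : ℂ[X] => q.coeff (n + 2)) h
  have e1 := congrArg (fun q : ℂ[X] => q.coeff (n + 1)) h
  simp only [coeff_add, coeff_C_mul, coeff_map, coeff_C_succ, add_zero, c1, c2] at e1 e2
  have ea : a ^ (n + 1) = e * j (f.coeff (n + 2)) := by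
    refine mul_left_cancel₀ ha ?_
    linear_combination (-e : ℂ) * e2 - a ^ (n + 2) * he2
  have eb : b * j (((n + 2 : ℕ) : R) * f.coeff (n + 2)) = a * j (f.coeff (n + 1)) := by
    rw [e1, ea, map_mul, map_natCast]
    linear_combination (-(n + 2 : ℕ) * j (f.coeff (n + 2)) * b) * he2
  have hva : V.valuation a = 1 := by
    have h1 := congrArg V.valuation ea
    have hve : V.valuation (e : ℂ) = 1 := by rcases he with rfl | ⟨rfl, -⟩ <;> simp
    rw [map_pow, map_mul, hunit _ hl, hve, mul_one] at h1
    exact (pow_eq_one_iff_left (by omega)).1 h1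
  have haV : a ∈ V := (V.valuation_le_one_iff _).1 hva.le
  have hbV : b ∈ V := by
    have h1 := congrArg V.valuation eb
    rw [V.valuation.map_mul, V.valuation.map_mul, hunit _ hp, hva, one_mul, mul_one] at h1
    rw [← V.valuation_le_one_iff, h1, V.valuation_le_one_iff]
    exact hjV _
  have hVeq : C (⟨a, haV⟩ : V) * f.map jV + C (⟨b, hbV⟩ : V)
      = C (e : V) * (dickson 1 (1 : V) (n + 2)).comp (C (⟨a, haV⟩ : V) * X + C (⟨b, hbV⟩ : V)) := by
    refine Polynomial.map_injective V.subtype Subtype.val_injective ?_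
    have hcomp : V.subtype.comp jV = j := rfl
    simpa [Polynomial.map_comp, map_dickson, Polynomial.map_map, hcomp] using h
  have hEeq := congrArg (Polynomial.map π) hVeq
  simp only [Polynomial.map_add, Polynomial.map_mul, map_C, Polynomial.map_comp, map_dickson,
    Polynomial.map_map, map_one, map_X, map_intCast] at hEeq
  rw [← hmk, ← Polynomial.map_map] at hEeq
  refine perCount_eq_perCount_dickson (E := E) hd ?_ (f.map (Ideal.Quotient.mk p)) (ε := (e : E))
    (a := π ⟨a, haV⟩) (b := π ⟨b, hbV⟩) ?_ ?_ ?_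
  · intro h0
    refine hp (Ideal.mul_mem_right _ _ (Ideal.Quotient.eq_zero_iff_mem.1 ?_))
    rw [map_natCast]
    exact h0
  · rcases he with rfl | ⟨rfl, ho⟩
    · exact .inl (by simp)
    · exact .inr ⟨by simp, ho⟩
  · rw [Ne, hπ0]
    exact hva.not_lt
  · rw [hEeq, Polynomial.map_intCast, map_intCast]

/-- Since `T_d` is even for even `d`, the sign `-1` is only needed for odd `d`: otherwise it is
absorbed by replacing `(a, b)` with `(-a, -b)`. -/
theorem IsLinConjChebyshev.exists_polynomial_eq {R : Type*} [CommRing R] {ρ : R →+* ℂ} {f : R[X]}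
    {d : ℕ} (h : IsLinConjChebyshev ρ f d) :
    ∃ (e : ℤ) (a b : ℂ), (e = 1 ∨ (e = -1 ∧ Odd d)) ∧ a ≠ 0 ∧
      C a * f.map ρ + C b = C (e : ℂ) * (dickson 1 (1 : ℂ) d).comp (C a * X + C b) := by
  obtain ⟨ε, a, b, hε, ha, h⟩ := h
  rcases hε with rfl | rfl
  · exact ⟨1, a, b, .inl rfl, ha, Polynomial.funext fun x => by simpa using h x⟩
  rcases Nat.even_or_odd d with hd | hd
  · refine ⟨1, -a, -b, .inl rfl, neg_ne_zero.2 ha, Polynomial.funext fun x => ?_⟩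
    have hx := h x
    have hev := dickson_eval_neg (a * x + b) d
    rw [hd.neg_one_pow, one_mul] at hev
    simp only [eval_add, eval_mul, eval_C, eval_comp, eval_X, Int.cast_one]
    rw [show -a * x + -b = -(a * x + b) by ring, hev]
    linear_combination -hx
  · exact ⟨-1, a, b, .inr ⟨rfl, hd⟩, ha, Polynomial.funext fun x => by simpa using h x⟩

theorem perInf_of_conj_chebyshev (K : Type*) [Field K] [NumberField K]
    (ι : K →+* ℂ) (d : ℕ) (hd : 2 ≤ d) (f : (𝓞 K)[X]) (hdeg : f.natDegree = d)
    (hconj : IsLinConjChebyshev (ι.comp (algebraMap (𝓞 K) K)) f d) :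
    perInf K f = perInf K (Polynomial.dickson 1 1 d : (𝓞 K)[X]) := by
  obtain ⟨e, a, b, he, ha, h⟩ := hconj.exists_polynomial_eq
  have hj : Function.Injective (ι.comp (algebraMap (𝓞 K) K)) :=
    ι.injective.comp (FaithfulSMul.algebraMap_injective (𝓞 K) K)
  have hs : (d : 𝓞 K) * f.coeff d ≠ 0 := by
    refine mul_ne_zero (Nat.cast_ne_zero.2 (by omega)) ?_
    rw [← hdeg]
    refine leadingCoeff_ne_zero.2 ?_
    rintro rfl
    simp at hdeg
    omega
  -- A prime of norm larger than that of `d * lead(f)` does not contain this element.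
  refine liminf_congr ?_
  filter_upwards [(eventually_gt_atTop
    (Ideal.absNorm (Ideal.span {(d : 𝓞 K) * f.coeff d}))).comap _] with 𝔭 h𝔭
  obtain ⟨p, hp, hp0⟩ := 𝔭
  simp only at h𝔭 ⊢
  have := hp.isMaximal hp0
  have : Finite (𝓞 K ⧸ p) := Ideal.finiteQuotientOfFreeOfNeBot p hp0
  rw [perCount_reduction_eq hj hd f he ha h p ?_, map_dickson, map_one]
  intro hmem
  refine h𝔭.not_ge (Nat.le_of_dvd ?_ (Ideal.absNorm_dvd_absNorm_of_le
    ((Ideal.span_singleton_le_iff_mem _).2 hmem)))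
  rw [Nat.pos_iff_ne_zero, Ne, Ideal.absNorm_eq_zero_iff, Ideal.span_singleton_eq_bot]
  exact hs
end

section
/- Let K be a number field and let m_K be the largest positive integer m such that K contains a primitive m-th root of unity. Let d ≥ 2 be an odd integer that has at least two distinct prime factors (i.e., d is not a prime power), and suppose every prime dividing d also divides m_K. Then Per_inf(T_d,K) = 1/2, where T_d is regarded as a polynomial with coefficients in 𝓞_K. -/
/-!
Away from the fixed points `±2`, an element `α` of a finite field `F` with `q` elements is
`x + x⁻¹` either with `x ∈ Fˣ` or with `x ^ (q + 1) = 1` in the quadratic extension, and these two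
kinds of elements each make up about half of `F`. Since `T_d (x + x⁻¹) = x ^ d + x⁻¹ ^ d`, the
element `α` is periodic exactly when `x` is periodic under the power map.

*Lower bound.* As `K` contains a primitive `p`-th root of unity for each prime `p ∣ d`, all but
finitely many `𝔭` satisfy `N(𝔭) ≡ 1 mod p`, hence `d` (which is odd) is prime to `N(𝔭) + 1` and the
whole second half is periodic (`card_le_two_mul_perCount`).

*Upper bound.* Fix a prime `p ∣ d`. By Dirichlet's theorem, for each `k` there are `𝔭` of arbitrarily
large norm with `p ^ k ∣ N(𝔭) - 1`. A unit `x` periodic under `x ↦ x ^ d` has order prime to `p`, so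
for such `𝔭` at most a proportion `p ^ (-k)` of the first half is periodic
(`two_mul_perCount_le`). Letting `k → ∞` gives the value `1 / 2`.
-/

open Polynomial NumberField Filter

/-! ### Chebyshev iteration over a finite field -/

/-- Iterates of `T_d` correspond to iterates of the `d`-th power map under `x ↦ x + x⁻¹`, where `x`
may live in an extension `L` of `F`. -/
lemma map_iterate_dickson {F L : Type*} [CommRing F] [CommRing L] (φ : F →+* L) (d : ℕ)
    (α : F) (x y : L) (hxy : x * y = 1) (h : φ α = x + y) (m : ℕ) :
    φ ((fun z => (dickson 1 (1 : F) d).eval z)^[m] α) = x ^ d ^ m + y ^ d ^ m := by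
  induction m with
  | zero => simpa using h
  | succ m ih =>
    rw [Function.iterate_succ_apply', ← eval₂_at_apply, ← eval_map, map_dickson, ih, map_one,
      dickson_one_one_eval_add_inv _ _ (by rw [← mul_pow, hxy, one_pow]), ← pow_mul, ← pow_mul,
      ← pow_succ]

lemma eq_or_eq_of_add_eq_add {L : Type*} [Field L] {x y u v : L} (hxy : x * y = 1)
    (huv : u * v = 1) (h : x + y = u + v) : u = x ∨ u = y := by
  have : (u - x) * (u - y) = 0 := by linear_combination u * (-h) + hxy - huv
  rcases mul_eq_zero.1 this with h | h
  · exact Or.inl (sub_eq_zero.1 h)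
  · exact Or.inr (sub_eq_zero.1 h)

lemma mem_range_of_pow_card_eq {F L : Type*} [Field F] [Fintype F] [Field L] (φ : F →+* L) (x : L)
    (hx : x ^ Fintype.card F = x) : ∃ a, φ a = x := by
  classical
  by_contra hne
  have hne0 : (X ^ Fintype.card F - X : L[X]) ≠ 0 :=
    FiniteField.X_pow_card_sub_X_ne_zero L Fintype.one_lt_card
  have hsub : insert x (Finset.univ.image φ) ⊆ (X ^ Fintype.card F - X : L[X]).roots.toFinset := by
    intro z hz
    rw [Multiset.mem_toFinset, mem_roots hne0]
    simp only [Finset.mem_insert, Finset.mem_image, Finset.mem_univ, true_and] at hz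
    rcases hz with rfl | ⟨a, rfl⟩
    · simp [hx]
    · simp [← map_pow, FiniteField.pow_card]
  have h1 := Finset.card_le_card hsub
  rw [Finset.card_insert_of_notMem (by simpa using hne),
    Finset.card_image_of_injective _ φ.injective, Finset.card_univ] at h1
  have h2 := (Multiset.toFinset_card_le (X ^ Fintype.card F - X : L[X]).roots).trans (card_roots' _)
  rw [FiniteField.X_pow_card_sub_X_natDegree_eq L Fintype.one_lt_card] at h2
  omega

lemma exists_add_inv_s5 {L : Type*} [Field L] [IsAlgClosed L] (a : L) :
    ∃ x y : L, x * y = 1 ∧ a = x + y := by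
  obtain ⟨x, hx⟩ := IsAlgClosed.exists_root (X ^ 2 - C a * X + 1 : L[X]) (by
    have : (X ^ 2 - C a * X + 1 : L[X]).degree = 2 := by compute_degree!
    rw [this]; norm_num)
  refine ⟨x, a - x, ?_, by ring⟩
  simp only [IsRoot, eval_add, eval_sub, eval_pow, eval_X, eval_mul, eval_C, eval_one] at hx
  linear_combination -hx

lemma pow_pow_totient_eq {M : Type*} [Monoid M] {d n : ℕ} (hcop : Nat.Coprime d n) {x : M}
    (hx : x ^ n = 1) : x ^ d ^ n.totient = x := by
  have hmod : d ^ n.totient % n = 1 % n := Nat.ModEq.pow_totient hcop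
  rw [pow_eq_pow_mod _ hx, hmod, ← pow_eq_pow_mod _ hx, pow_one]

/-- If `d` is odd and prime to `q + 1`, then every `α` which is not of the form `x + x⁻¹` with
`x ∈ F`, `x ≠ ±1`, is periodic, and there are at least `q / 2` such `α`. -/
lemma card_le_two_mul_perCount {F : Type*} [Field F] [Finite F] (d : ℕ)
    (hodd : Odd d) (hcop : Nat.Coprime d (Nat.card F + 1)) :
    Nat.card F ≤ 2 * perCount (dickson 1 1 d : F[X]) := by
  classical
  have := Fintype.ofFinite F
  rw [Nat.card_eq_fintype_card] at *
  set q := Fintype.card F with hq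
  set T : Finset F := Finset.univ.filter (fun x => x ≠ 0 ∧ x ≠ 1 ∧ x ≠ -1) with hT
  set S := T.image (fun x => x + x⁻¹) with hS
  have hS2 : 2 * S.card ≤ T.card := by
    refine Finset.mul_card_image_le_card T 2 fun a ha => ?_
    obtain ⟨x, hx, rfl⟩ := Finset.mem_image.1 ha
    simp only [hT, Finset.mem_filter, Finset.mem_univ, true_and] at hx
    obtain ⟨h0, h1, h2⟩ := hx
    have hne : x ≠ x⁻¹ := by
      intro h
      have : x * x = 1 := by nth_rewrite 2 [h]; exact mul_inv_cancel₀ h0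
      rcases mul_self_eq_one_iff.1 this with h | h
      · exact h1 h
      · exact h2 h
    rw [← Finset.card_pair hne]
    refine Finset.card_le_card fun z hz => ?_
    simp only [Finset.mem_insert, Finset.mem_singleton] at hz
    simp only [hT, Finset.mem_filter, Finset.mem_univ, true_and]
    rcases hz with rfl | rfl
    · exact ⟨⟨h0, h1, h2⟩, rfl⟩
    · refine ⟨⟨inv_ne_zero h0, by simpa using h1, fun h => h2 ?_⟩, by rw [inv_inv, add_comm]⟩
      rw [← inv_inv x, h, inv_neg, inv_one]
  have hTq : T.card ≤ q := Finset.card_le_univ T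
  have hper : ((Sᶜ : Finset F) : Set F) ⊆
      {α : F | ∃ m, 1 ≤ m ∧ (fun x => (dickson 1 1 d : F[X]).eval x)^[m] α = α} := by
    intro α hα
    let L := AlgebraicClosure F
    let φ := algebraMap F L
    obtain ⟨x, y, hxy, hαx⟩ := exists_add_inv_s5 (φ α)
    -- It is enough that some iterate of the `d`-th power map fixes `x`, hence also `y = x⁻¹`.
    have key : ∀ m, 1 ≤ m → x ^ d ^ m = x →
        ∃ m, 1 ≤ m ∧ (fun x => (dickson 1 1 d : F[X]).eval x)^[m] α = α := by
      intro m hm h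
      refine ⟨m, hm, φ.injective ?_⟩
      rw [map_iterate_dickson φ d α x y hxy hαx, hαx, h]
      have hy : y = x⁻¹ := (inv_eq_of_mul_eq_one_right hxy).symm
      rw [hy, inv_pow, h]
    obtain ⟨p, hp⟩ := CharP.exists F
    have : CharP L p := charP_of_injective_algebraMap φ.injective p
    obtain ⟨n, hpp, hn⟩ := FiniteField.card F p
    have : Fact p.Prime := ⟨hpp⟩
    have hfrob : x ^ q + y ^ q = x + y := by
      rw [hq, hn, ← add_pow_char_pow, ← hαx, ← hn, ← map_pow, FiniteField.pow_card]
    rcases eq_or_eq_of_add_eq_add hxy (by rw [← mul_pow, hxy, one_pow]) hfrob.symm with h | h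
    ·
      -- `x` lies in `F`; as `α ∉ S`, this forces `x = ±1`.
      obtain ⟨a, ha⟩ := mem_range_of_pow_card_eq φ x h
      have ha0 : a ≠ 0 := by
        rintro rfl
        rw [map_zero] at ha
        rw [← ha, zero_mul] at hxy
        exact zero_ne_one hxy
      have hαa : α = a + a⁻¹ := by
        apply φ.injective
        rw [hαx, map_add, map_inv₀, ha, inv_eq_of_mul_eq_one_right hxy]
      have ha1 : a = 1 ∨ a = -1 := by
        by_contra hcon
        rw [not_or] at hcon
        refine (Finset.mem_compl.1 hα) (Finset.mem_image.2 ⟨a, ?_, hαa.symm⟩)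
        simp [hT, ha0, hcon.1, hcon.2]
      refine key 1 le_rfl ?_
      rw [pow_one, ← ha]
      rcases ha1 with rfl | rfl
      · simp
      · simp [hodd.neg_one_pow]
    ·
      -- `x ^ (q + 1) = 1`, and the `d`-th power map permutes the `(q + 1)`-st roots of unity.
      have hx1 : x ^ (q + 1) = 1 := by rw [pow_succ, h, mul_comm, hxy]
      refine key (q + 1).totient (Nat.totient_pos.2 (Nat.succ_pos _)) ?_
      exact pow_pow_totient_eq hcop hx1
  have hcard : (Sᶜ : Finset F).card ≤ perCount (dickson 1 1 d : F[X]) := by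
    rw [← Set.ncard_coe_finset]
    exact Set.ncard_le_ncard hper
  rw [Finset.card_compl] at hcard
  omega

/-- If `p ∣ d` and `q - 1 = p ^ k * r`, then every periodic `α` of the form `x + x⁻¹` with `x ∈ F`
has `x ^ r = 1`, so there are at most `r` of these. -/
lemma two_mul_perCount_le {F : Type*} [Field F] [Finite F] (d p k r : ℕ) (hp : p.Prime)
    (hpd : p ∣ d) (hr : 0 < r) (hq : Nat.card F = p ^ k * r + 1) :
    2 * perCount (dickson 1 1 d : F[X]) ≤ Nat.card F + 1 + 2 * r := by
  classical
  have := Fintype.ofFinite F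
  rw [Nat.card_eq_fintype_card] at *
  set T : Finset F := Finset.univ.erase 0 with hT
  set S := T.image (fun x => x + x⁻¹) with hS
  have hTc : T.card = p ^ k * r := by
    rw [hT, Finset.card_erase_of_mem (Finset.mem_univ _), Finset.card_univ, hq]; rfl
  have hS2 : T.card ≤ 2 * S.card := by
    refine Finset.card_le_mul_card_image T 2 fun a ha => ?_
    obtain ⟨x, hx, rfl⟩ := Finset.mem_image.1 ha
    have hx0 : x ≠ 0 := Finset.ne_of_mem_erase hx
    refine (Finset.card_le_card (t := {x, x⁻¹}) fun z hz => ?_).trans Finset.card_le_two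
    obtain ⟨hz, hzx⟩ := Finset.mem_filter.1 hz
    have hz0 : z ≠ 0 := Finset.ne_of_mem_erase hz
    rcases eq_or_eq_of_add_eq_add (mul_inv_cancel₀ hx0) (mul_inv_cancel₀ hz0) hzx.symm with h | h
    · simp [h]
    · simp [h]
  have hper : {α : F | ∃ m, 1 ≤ m ∧ (fun x => (dickson 1 1 d : F[X]).eval x)^[m] α = α} ⊆
      ((Sᶜ ∪ (nthRootsFinset r (1 : F)).image (fun x => x + x⁻¹) : Finset F) : Set F) := by
    rintro α ⟨m, hm, hα⟩
    rw [Finset.mem_coe, Finset.mem_union, Finset.mem_compl]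
    by_cases hαS : α ∈ S
    swap
    · exact Or.inl hαS
    right
    obtain ⟨x, hx, rfl⟩ := Finset.mem_image.1 hαS
    have hx0 : x ≠ 0 := Finset.ne_of_mem_erase hx
    refine Finset.mem_image.2 ⟨x, (mem_nthRootsFinset hr 1).2 ?_, rfl⟩
    have hit := map_iterate_dickson (RingHom.id F) d (x + x⁻¹) x x⁻¹ (mul_inv_cancel₀ hx0) rfl m
    rw [hα, RingHom.id_apply] at hit
    -- Applying the `d ^ m`-th power map twice fixes `x`, since one application gives `x` or `x⁻¹`.
    have hfix : x ^ (d ^ m * d ^ m) = x := by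
      rw [pow_mul]
      rcases eq_or_eq_of_add_eq_add (mul_inv_cancel₀ hx0)
        (by rw [← mul_pow, mul_inv_cancel₀ hx0, one_pow]) hit with h | h
      · rw [h, h]
      · rw [h, inv_pow, h, inv_inv]
    have hmod : d ^ m * d ^ m ≡ 1 [MOD orderOf x] := by
      rw [← (isOfFinOrder_iff_pow_eq_one.2
        ⟨Fintype.card F - 1, by have := Fintype.one_lt_card (α := F); omega,
          FiniteField.pow_card_sub_one_eq_one x hx0⟩).pow_eq_pow_iff_modEq, hfix, pow_one]
    have hcop : Nat.Coprime (orderOf x) (p ^ k) := by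
      refine Nat.Coprime.pow_right k ((Nat.Prime.coprime_iff_not_dvd hp).2 fun hpo => ?_).symm
      have h1 := hmod.of_dvd hpo
      have h2 : p ∣ d ^ m * d ^ m := Dvd.dvd.mul_right (dvd_pow hpd (by omega)) _
      have h3 : p ∣ 1 := (Nat.ModEq.dvd_iff h1 dvd_rfl).1 h2
      exact hp.one_lt.ne' (Nat.dvd_one.1 h3)
    refine orderOf_dvd_iff_pow_eq_one.1 (hcop.dvd_of_dvd_mul_left ?_)
    refine orderOf_dvd_of_pow_eq_one ?_
    have := FiniteField.pow_card_sub_one_eq_one x hx0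
    rwa [hq] at this
  have hcard : perCount (dickson 1 1 d : F[X]) ≤ (Sᶜ : Finset F).card + r := by
    refine (Set.ncard_le_ncard hper (Finset.finite_toSet _)).trans ?_
    rw [Set.ncard_coe_finset]
    refine (Finset.card_union_le _ _).trans (Nat.add_le_add_left ?_ _)
    refine Finset.card_image_le.trans ?_
    exact (Multiset.toFinset_card_le _).trans (card_nthRoots r 1)
  rw [Finset.card_compl] at hcard
  have := Finset.card_le_univ S
  omega

/-! ### Reduction modulo primes of a number field -/

lemma absNorm_eq_card {K : Type*} [Field K] [NumberField K] (I : Ideal (𝓞 K)) :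
    Ideal.absNorm I = Nat.card (𝓞 K ⧸ I) := rfl

/-- Primes of large norm do not contain a given nonzero natural number. -/
lemma natCast_notMem_of_lt {K : Type*} [Field K] [NumberField K] (n : ℕ) (hn : n ≠ 0)
    (I : Ideal (𝓞 K)) (h : n ^ Module.finrank ℤ (𝓞 K) < Ideal.absNorm I) : (n : 𝓞 K) ∉ I := by
  intro hmem
  have hdvd : Ideal.absNorm I ∣ n ^ Module.finrank ℤ (𝓞 K) := by
    rw [← Ideal.absNorm_span_natCast]
    exact Ideal.absNorm_dvd_absNorm_of_le ((Ideal.span_singleton_le_iff_mem _).2 hmem)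
  exact absurd (Nat.le_of_dvd (pow_pos (Nat.pos_of_ne_zero hn) _) hdvd) (not_le.2 h)

/-- If `K` contains a primitive `p`-th root of unity, then `N(𝔭) ≡ 1 mod p` for `𝔭 ∤ p`. -/
lemma dvd_card_sub_one {K : Type*} [Field K] (p : ℕ) (hp : p.Prime) (ζ : K)
    (hζ : IsPrimitiveRoot ζ p)
    (I : Ideal (𝓞 K)) [I.IsMaximal] [Finite (𝓞 K ⧸ I)] (hpI : (p : 𝓞 K) ∉ I) :
    p ∣ Nat.card (𝓞 K ⧸ I) - 1 := by
  let : Field (𝓞 K ⧸ I) := Ideal.Quotient.field I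
  have := Fintype.ofFinite (𝓞 K ⧸ I)
  have : NeZero p := ⟨hp.ne_zero⟩
  have hz : IsPrimitiveRoot hζ.toInteger p := hζ.toInteger_isPrimitiveRoot
  set z : 𝓞 K ⧸ I := Ideal.Quotient.mk I hζ.toInteger with hzdef
  have hz1 : z ^ p = 1 := by rw [hzdef, ← map_pow, hz.pow_eq_one, map_one]
  have hsum : ∑ i ∈ Finset.range p, z ^ i = 0 := by
    have := congrArg (Ideal.Quotient.mk I) (hz.geom_sum_eq_zero hp.one_lt)
    simpa [map_sum, map_pow] using this
  have hne : z ≠ 1 := by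
    intro h
    rw [h] at hsum
    apply hpI
    rw [← Ideal.Quotient.eq_zero_iff_mem]
    simpa using hsum
  have : Fact p.Prime := ⟨hp⟩
  have hord : orderOf z = p := orderOf_eq_prime hz1 hne
  have hz0 : z ≠ 0 := by
    intro h
    rw [h, zero_pow hp.ne_zero] at hz1
    exact zero_ne_one hz1
  rw [← hord, Nat.card_eq_fintype_card]
  exact orderOf_dvd_of_pow_eq_one (FiniteField.pow_card_sub_one_eq_one z hz0)

/-- There are primes `𝔭` of arbitrarily large norm with `N(𝔭) ≡ 1 mod n`: those above a rational
prime `ℓ ≡ 1 mod n`. -/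
lemma exists_prime_absNorm (K : Type*) [Field K] [NumberField K] (n : ℕ) (hn : n ≠ 0) (N : ℕ) :
    ∃ I : Ideal (𝓞 K), I.IsPrime ∧ I ≠ ⊥ ∧ N ≤ Ideal.absNorm I ∧
      Ideal.absNorm I ≡ 1 [MOD n] := by
  obtain ⟨l, hl, hNl, hmod⟩ := Nat.exists_prime_gt_modEq_one N hn
  have hfr : Module.finrank ℤ (𝓞 K) ≠ 0 := Module.finrank_pos.ne'
  have hnorm := Ideal.absNorm_span_natCast (S := 𝓞 K) l
  have hne : Ideal.span {(l : 𝓞 K)} ≠ ⊤ := by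
    intro h
    rw [h, Ideal.absNorm_top] at hnorm
    exact (Nat.one_lt_pow hfr hl.one_lt).ne hnorm
  obtain ⟨I, hI, hle⟩ := Ideal.exists_le_maximal _ hne
  have hdvd := Ideal.absNorm_dvd_absNorm_of_le hle
  rw [hnorm] at hdvd
  obtain ⟨j, -, hj⟩ := (Nat.dvd_prime_pow hl).1 hdvd
  have hj0 : j ≠ 0 := by
    rintro rfl
    rw [pow_zero, Ideal.absNorm_eq_one_iff] at hj
    exact hI.ne_top hj
  refine ⟨I, hI.isPrime, ?_, ?_, ?_⟩
  · rintro rfl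
    rw [Ideal.absNorm_bot] at hj
    exact (pow_pos hl.pos j).ne hj
  · rw [hj]
    exact hNl.le.trans (Nat.le_self_pow hj0 l)
  · rw [hj]
    simpa using hmod.pow j

theorem perInf_chebyshev_odd_rad_dvd (K : Type*) [Field K] [NumberField K]
    (mK : ℕ) (hmK : 0 < mK ∧ (∃ ζ : K, IsPrimitiveRoot ζ mK) ∧
      ∀ m : ℕ, 0 < m → (∃ ζ : K, IsPrimitiveRoot ζ m) → m ≤ mK)
    (d : ℕ) (hd : 2 ≤ d) (hodd : Odd d) (hnotpp : ¬ IsPrimePow d)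
    (hrad : ∀ p : ℕ, p.Prime → p ∣ d → p ∣ mK) :
    perInf K (Polynomial.dickson 1 1 d : (𝓞 K)[X]) = 1 / 2 := by
  obtain ⟨hmpos, ⟨ζ, hζ⟩, -⟩ := hmK
  have hlower : ∀ᶠ 𝔭 in comap (fun 𝔭 : {I : Ideal (𝓞 K) // I.IsPrime ∧ I ≠ ⊥} =>
      Ideal.absNorm 𝔭.1) atTop, (1 / 2 : ℝ) ≤
      (perCount ((dickson 1 1 d : (𝓞 K)[X]).map (Ideal.Quotient.mk 𝔭.1)) : ℝ) /
        (Ideal.absNorm 𝔭.1 : ℝ) := by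
    filter_upwards [tendsto_comap.eventually
      (eventually_gt_atTop (d ^ Module.finrank ℤ (𝓞 K)))] with 𝔭 h𝔭
    obtain ⟨I, hIp, hI0⟩ := 𝔭
    dsimp only at h𝔭 ⊢
    have : I.IsMaximal := hIp.isMaximal hI0
    have hN0 : Ideal.absNorm I ≠ 0 := by omega
    have : Finite (𝓞 K ⧸ I) := (Ideal.absNorm_ne_zero_iff I).1 hN0
    have hdI : (d : 𝓞 K) ∉ I := natCast_notMem_of_lt d (by omega) I h𝔭
    have hcop : Nat.Coprime d (Nat.card (𝓞 K ⧸ I) + 1) := by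
      refine Nat.Coprime.symm (Nat.coprime_of_dvd fun p hp hpq hpd => ?_)
      obtain ⟨c, hc⟩ := hrad p hp hpd
      have hζp : IsPrimitiveRoot (ζ ^ c) p := hζ.pow hmpos (by rw [hc, mul_comm])
      have hpI : (p : 𝓞 K) ∉ I := by
        intro h
        obtain ⟨e, rfl⟩ := hpd
        apply hdI
        push_cast
        exact I.mul_mem_right _ h
      have h1 := dvd_card_sub_one p hp _ hζp I hpI
      -- `p` divides both `q - 1` and `q + 1`, hence `2`; but `p ∣ d` is odd.
      have h2 : p ∣ 2 := by
        have := Nat.dvd_sub hpq h1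
        have hpos : 0 < Nat.card (𝓞 K ⧸ I) := Nat.card_pos
        rwa [show Nat.card (𝓞 K ⧸ I) + 1 - (Nat.card (𝓞 K ⧸ I) - 1) = 2 by omega] at this
      have h3 : p = 2 := (Nat.prime_dvd_prime_iff_eq hp Nat.prime_two).1 h2
      rw [h3] at hpd
      exact (Nat.not_even_iff_odd.2 hodd) (even_iff_two_dvd.2 hpd)
    let : Field (𝓞 K ⧸ I) := Ideal.Quotient.field I
    have hmain := card_le_two_mul_perCount (F := 𝓞 K ⧸ I) d hodd hcop
    rw [map_dickson, map_one, div_le_div_iff₀ two_pos (by positivity), one_mul, mul_comm,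
      absNorm_eq_card]
    exact_mod_cast hmain
  have hupper : ∀ ε : ℝ, 0 < ε → ∃ᶠ 𝔭 in comap (fun 𝔭 : {I : Ideal (𝓞 K) // I.IsPrime ∧ I ≠ ⊥} =>
      Ideal.absNorm 𝔭.1) atTop,
      (perCount ((dickson 1 1 d : (𝓞 K)[X]).map (Ideal.Quotient.mk 𝔭.1)) : ℝ) /
        (Ideal.absNorm 𝔭.1 : ℝ) ≤ 1 / 2 + ε := by
    intro ε hε
    obtain ⟨p, hp, hpd⟩ := Nat.exists_prime_and_dvd (show d ≠ 1 by omega)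
    obtain ⟨k, hk⟩ := exists_pow_lt_of_lt_one (half_pos hε)
      (inv_lt_one_of_one_lt₀ (show (1 : ℝ) < p by exact_mod_cast hp.one_lt))
    obtain ⟨M, hM⟩ := exists_nat_gt (1 / ε)
    rw [frequently_comap, frequently_atTop]
    intro N
    obtain ⟨I, hIp, hI0, hNI, hmod⟩ :=
      exists_prime_absNorm K (p ^ k) (pow_pos hp.pos k).ne' (max N (max M 2))
    refine ⟨_, (le_max_left _ _).trans hNI, ⟨I, hIp, hI0⟩, rfl, ?_⟩
    dsimp only
    have hMI : M ≤ Ideal.absNorm I := ((le_max_left _ _).trans (le_max_right _ _)).trans hNI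
    have h2I : 2 ≤ Ideal.absNorm I := ((le_max_right _ _).trans (le_max_right _ _)).trans hNI
    have : I.IsMaximal := hIp.isMaximal hI0
    have : Finite (𝓞 K ⧸ I) := (Ideal.absNorm_ne_zero_iff I).1 (by omega)
    obtain ⟨r, hr⟩ := (Nat.modEq_iff_dvd' (by omega)).1 hmod.symm
    have hr0 : 0 < r := by
      rcases Nat.eq_zero_or_pos r with rfl | h
      · rw [mul_zero] at hr; omega
      · exact h
    have hq : Ideal.absNorm I = p ^ k * r + 1 := by omega
    let : Field (𝓞 K ⧸ I) := Ideal.Quotient.field I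
    have hmain := two_mul_perCount_le (F := 𝓞 K ⧸ I) d p k r hp hpd hr0 hq
    rw [← absNorm_eq_card] at hmain
    have hmain' : 2 * (perCount (dickson 1 1 d : (𝓞 K ⧸ I)[X]) : ℝ) ≤
        (Ideal.absNorm I : ℝ) + 1 + 2 * r := by exact_mod_cast hmain
    have hq' : (Ideal.absNorm I : ℝ) = p ^ k * r + 1 := by exact_mod_cast hq
    have hqpos : (0 : ℝ) < Ideal.absNorm I := by exact_mod_cast (by omega : 0 < Ideal.absNorm I)
    have h1 : 1 ≤ ε * Ideal.absNorm I := by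
      have : 1 / ε ≤ (Ideal.absNorm I : ℝ) := hM.le.trans (by exact_mod_cast hMI)
      rwa [div_le_iff₀ hε, mul_comm] at this
    have hpk : (0 : ℝ) < (p : ℝ) ^ k := pow_pos (by exact_mod_cast hp.pos) k
    have h2 : (r : ℝ) ≤ ε / 2 * Ideal.absNorm I := by
      have hk' : 1 ≤ ε / 2 * (p : ℝ) ^ k := by
        rw [inv_pow, inv_lt_iff_one_lt_mul₀ hpk] at hk
        exact hk.le
      have : (r : ℝ) * 1 ≤ r * (ε / 2 * (p : ℝ) ^ k) := by gcongr
      rw [hq']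
      nlinarith
    rw [map_dickson, map_one, div_le_iff₀ hqpos]
    have hgoal : (perCount (dickson 1 1 d : (𝓞 K ⧸ I)[X]) : ℝ) ≤
      (1 / 2 + ε) * (Ideal.absNorm I : ℝ) := by linarith
    exact hgoal
  refine le_antisymm (le_of_forall_pos_le_add fun ε hε => ?_) ?_
  · exact liminf_le_of_frequently_le (hupper ε hε) ⟨1 / 2, eventually_map.2 hlower⟩
  · exact le_liminf_of_le (IsCoboundedUnder.of_frequently_le (hupper 1 one_pos)) hlower
end

section
/- Let K be a number field and let m_K be the largest positive integer m such that K contains a primitive m-th root of unity. Let d ≥ 2 be an even integer that has at least two distinct prime factors (i.e., d is not a prime power), suppose every prime dividing d also divides m_K, and suppose 4 ∣ m_K (i.e., the 2-adic valuation of m_K is at least 2). Then Per_inf(T_d,K) = 1/4, where T_d is regarded as a polynomial with coefficients in 𝓞_K. -/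
/-!
Write a point `α` of a finite field `F` with `q` elements as `x + x⁻¹` with `x` in an algebraic
closure; then `x ^ q = x` or `x ^ q = x⁻¹`, that is `x ^ (q - 1) = 1` or `x ^ (q + 1) = 1`, and
conversely such `x` give points of `F`. Since `T_d (x + x⁻¹) = x ^ d + x⁻¹ ^ d`, the point `α` is
periodic for `T_d` if and only if the order of `x` is coprime to `d`.

For all `𝔭` of large norm `q`, the group of roots of unity of `K` injects into `𝔽_𝔭`, so `4` and
every prime dividing `d` divide `q - 1`. Hence `(q + 1) / 2` is odd and coprime to `d`, and the
`(q + 1) / 2`-th roots of unity, taken up to inversion, give at least `q / 4` periodic points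
(`le_perCount`). On the other hand, as `d` is even, only `x` of odd order matter, so when
`2 ^ N ∣ q - 1` there are at most about `q / 4 + q / 2 ^ (N + 1)` periodic points
(`perCount_le`). Primes `𝔭` above a rational prime `p ≡ 1 (mod 2 ^ N)` satisfy
`2 ^ N ∣ N(𝔭) - 1`, and such `p` exist beyond every bound, so the lower bound `1 / 4` is the
liminf.
-/

open Polynomial NumberField Filter

/-! ### Periodic points of Chebyshev polynomials over finite fields -/

section FiniteField

lemma dickson_iterate_s6 {E : Type*} [Field E] (d : ℕ) (x : E) (hx : x ≠ 0) (m : ℕ) :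
    (fun y => (dickson 1 (1 : E) d).eval y)^[m] (x + x⁻¹) = x ^ d ^ m + (x ^ d ^ m)⁻¹ := by
  induction m with
  | zero => simp
  | succ m ih =>
    rw [Function.iterate_succ_apply', ih]
    have h : x ^ d ^ m * (x ^ d ^ m)⁻¹ = 1 := mul_inv_cancel₀ (pow_ne_zero _ hx)
    simp only [dickson_one_one_eval_add_inv _ _ h d]
    rw [inv_pow, ← pow_mul, ← pow_succ]

lemma algebraMap_dickson_iterate {F E : Type*} [Field F] [Field E] [Algebra F E] (d m : ℕ)
    (α : F) : algebraMap F E ((fun y => (dickson 1 (1 : F) d).eval y)^[m] α) =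
      (fun y => (dickson 1 (1 : E) d).eval y)^[m] (algebraMap F E α) := by
  have h : Function.Semiconj (algebraMap F E) (fun y => (dickson 1 (1 : F) d).eval y)
      (fun y => (dickson 1 (1 : E) d).eval y) := by
    intro y
    have := Polynomial.eval_map_apply (f := algebraMap F E) (p := dickson 1 (1 : F) d) y
    rw [map_dickson, map_one] at this
    exact this.symm
  exact h.iterate_right m α

lemma eq_or_eq_inv_of_add_inv_eq {E : Type*} [Field E] {x y : E} (hx : x ≠ 0) (hy : y ≠ 0)
    (h : x + x⁻¹ = y + y⁻¹) : x = y ∨ x = y⁻¹ := by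
  have h1 : (x - y) * (x * y - 1) = 0 := by
    field_simp at h
    linear_combination h
  rcases mul_eq_zero.1 h1 with h2 | h2
  · exact Or.inl (sub_eq_zero.1 h2)
  · exact Or.inr (eq_inv_of_mul_eq_one_left (sub_eq_zero.1 h2))

/-- The fixed points of the `q`-power Frobenius all lie in the field with `q` elements. -/
lemma mem_range_of_pow_card_eq_s6 {F E : Type*} [Field F] [Finite F] [Field E] [Algebra F E]
    {y : E} (hy : y ^ Nat.card F = y) : ∃ α : F, algebraMap F E α = y := by
  classical
  cases nonempty_fintype F
  by_contra hne
  have hq : 1 < Fintype.card F := Fintype.one_lt_card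
  rw [Nat.card_eq_fintype_card] at hy
  -- otherwise `X ^ q - X` would have at least `q + 1` roots
  have hsub : (insert y (Finset.univ.image (algebraMap F E))).val ⊆
      (X ^ Fintype.card F - X : E[X]).roots := by
    intro z hz
    rw [mem_roots (FiniteField.X_pow_card_sub_X_ne_zero E hq)]
    have hz : z ∈ insert y (Finset.univ.image (algebraMap F E)) := hz
    simp only [Finset.mem_insert, Finset.mem_image, Finset.mem_univ, true_and] at hz
    rcases hz with rfl | ⟨a, rfl⟩
    · simp [IsRoot, hy]
    · simp [IsRoot, ← map_pow, FiniteField.pow_card]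
  have h1 := Polynomial.card_le_degree_of_subset_roots hsub
  rw [FiniteField.X_pow_card_sub_X_natDegree_eq E hq, Finset.card_insert_of_notMem,
    Finset.card_image_of_injective _ (algebraMap F E).injective, Finset.card_univ] at h1
  · omega
  · simpa using hne

/-- If `q ≡ 1 (mod 4)` and every prime dividing `d` divides `q - 1`, then `T_d` has at least
`q / 4` periodic points over the field with `q` elements: those coming from the roots of unity
of order dividing `(q + 1) / 2`. -/
lemma le_perCount {F : Type*} (E : Type*) [Field F] [Finite F] [Field E] [IsAlgClosed E]
    [Algebra F E] (d : ℕ)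
    (h4 : 4 ∣ Nat.card F - 1) (hrad : ∀ p : ℕ, p.Prime → p ∣ d → p ∣ Nat.card F - 1) :
    Nat.card F ≤ 4 * perCount (dickson 1 1 d : F[X]) := by
  classical
  set q := Nat.card F with hq
  have hq1 : 1 < q := Finite.one_lt_card
  obtain ⟨k, hk⟩ : ∃ k, q + 1 = 2 * k := ⟨(q + 1) / 2, by omega⟩
  have hcop : Nat.Coprime d k := by
    refine Nat.coprime_of_dvd fun p hp hpd hpk => ?_
    have h1 := hrad p hp hpd
    have h2 : p ∣ q + 1 := hk ▸ hpk.mul_left 2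
    have h3 : p ∣ 2 := by
      have := Nat.dvd_sub h2 h1
      rwa [show q + 1 - (q - 1) = 2 by omega] at this
    have h5 : p = 2 := (Nat.prime_dvd_prime_iff_eq hp Nat.prime_two).1 h3
    subst h5
    omega
  cases nonempty_fintype F
  have hqE : (q : E) = 0 := by
    rw [hq, Nat.card_eq_fintype_card, ← map_natCast (algebraMap F E), Nat.cast_card_eq_zero,
      map_zero]
  have hkE : NeZero (k : E) := ⟨fun h => by
    have : ((q + 1 : ℕ) : E) = ((2 * k : ℕ) : E) := by rw [hk]
    push_cast at this
    rw [hqE, h] at this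
    simp at this⟩
  obtain ⟨ζ, hζ⟩ := HasEnoughRootsOfUnity.exists_primitiveRoot E k
  have hk0 : 0 < k := by omega
  have hcard := hζ.card_nthRootsFinset
  have hne : ∀ x ∈ nthRootsFinset k (1 : E), x ≠ 0 := by
    rintro x hx rfl
    rw [mem_nthRootsFinset hk0, zero_pow hk0.ne'] at hx
    exact zero_ne_one hx
  have hfib : k ≤ 2 * ((nthRootsFinset k (1 : E)).image (fun x => x + x⁻¹)).card := by
    conv_lhs => rw [← hcard]
    refine Finset.card_le_mul_card_image _ 2 fun b hb => ?_
    obtain ⟨y, hy, rfl⟩ := Finset.mem_image.1 hb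
    refine (Finset.card_le_card (t := {y, y⁻¹}) fun x hx => ?_).trans Finset.card_le_two
    rw [Finset.mem_filter] at hx
    simpa using eq_or_eq_inv_of_add_inv_eq (hne x hx.1) (hne y hy) hx.2
  have hsub : (((nthRootsFinset k (1 : E)).image (fun x => x + x⁻¹) : Finset E) : Set E) ⊆
      algebraMap F E '' {α : F | ∃ m, 1 ≤ m ∧
        (fun x => (dickson 1 1 d : F[X]).eval x)^[m] α = α} := by
    intro y hy
    obtain ⟨x, hx, rfl⟩ := Finset.mem_image.1 (Finset.mem_coe.1 hy)
    have hx0 := hne x hx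
    rw [mem_nthRootsFinset hk0] at hx
    obtain ⟨α, hα⟩ : ∃ α : F, algebraMap F E α = x + x⁻¹ := by
      apply mem_range_of_pow_card_eq_s6
      obtain ⟨p, hp⟩ := CharP.exists F
      have := hp
      obtain ⟨n, hpp, hn⟩ := FiniteField.card F p
      have : Fact p.Prime := ⟨hpp⟩
      have : CharP E p := charP_of_injective_algebraMap (algebraMap F E).injective p
      have hxq : x ^ q * x = 1 := by rw [← pow_succ, hk, mul_comm, pow_mul, hx, one_pow]
      have hxq' : x ^ q = x⁻¹ := eq_inv_of_mul_eq_one_left hxq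
      have : (x + x⁻¹) ^ q = x ^ q + x⁻¹ ^ q := by
        rw [hq, Nat.card_eq_fintype_card, hn]
        exact add_pow_char_pow ..
      rw [← hq, this, inv_pow, hxq', inv_inv, add_comm]
    refine ⟨α, ⟨k.totient, Nat.totient_pos.2 hk0, ?_⟩, hα⟩
    apply (algebraMap F E).injective
    rw [algebraMap_dickson_iterate, hα, dickson_iterate_s6 d x hx0]
    have : x ^ d ^ k.totient = x := by
      have h := (Nat.ModEq.pow_totient hcop)
      have h' := pow_eq_pow_of_modEq h hx
      rwa [pow_one] at h'
    rw [this]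
  have h1 := Set.ncard_le_ncard hsub (Set.toFinite _)
  rw [Set.ncard_image_of_injective _ (algebraMap F E).injective, Set.ncard_coe_finset] at h1
  have h2 : perCount (dickson 1 1 d : F[X]) = Set.ncard {α : F | ∃ m, 1 ≤ m ∧
        (fun x => (dickson 1 1 d : F[X]).eval x)^[m] α = α} := rfl
  omega

/-- For odd `k` there are at most `(k + 1) / 2` values `x + x⁻¹` with `x ^ k = 1`. -/
lemma exists_finset_add_inv {E : Type*} [Field E] [IsSepClosed E] (k : ℕ) (hk : Odd k)
    (hkE : (k : E) ≠ 0) :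
    ∃ s : Finset E, 2 * s.card ≤ k + 1 ∧ ∀ x : E, x ^ k = 1 → x + x⁻¹ ∈ s := by
  classical
  have : NeZero (k : E) := ⟨hkE⟩
  obtain ⟨ζ, hζ⟩ := HasEnoughRootsOfUnity.exists_primitiveRoot E k
  obtain ⟨j, rfl⟩ := hk
  refine ⟨(Finset.range (j + 1)).image (fun i => ζ ^ i + (ζ ^ i)⁻¹), ?_, fun x hx => ?_⟩
  · have := Finset.card_image_le (s := Finset.range (j + 1)) (f := fun i => ζ ^ i + (ζ ^ i)⁻¹)
    rw [Finset.card_range] at this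
    omega
  · have : NeZero (2 * j + 1) := ⟨by omega⟩
    obtain ⟨i, hi, rfl⟩ := hζ.eq_pow_of_pow_eq_one hx
    rw [Finset.mem_image]
    by_cases hij : i < j + 1
    · exact ⟨i, Finset.mem_range.2 hij, rfl⟩
    · refine ⟨2 * j + 1 - i, Finset.mem_range.2 (by omega), ?_⟩
      -- `ζ ^ (k - i)` is the inverse of `ζ ^ i`
      have : ζ ^ (2 * j + 1 - i) = (ζ ^ i)⁻¹ := by
        apply eq_inv_of_mul_eq_one_left
        rw [← pow_add, Nat.sub_add_cancel hi.le, hζ.pow_eq_one]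
      rw [this, inv_inv, add_comm]

lemma exists_add_inv_eq {E : Type*} [Field E] [IsAlgClosed E] (a : E) :
    ∃ x : E, x ≠ 0 ∧ x + x⁻¹ = a := by
  have hdeg : (X ^ 2 - C a * X + 1 : E[X]).degree = 2 := by compute_degree!
  obtain ⟨x, hx⟩ := IsAlgClosed.exists_root (X ^ 2 - C a * X + 1 : E[X]) (by rw [hdeg]; decide)
  simp only [IsRoot, eval_add, eval_sub, eval_pow, eval_X, eval_mul, eval_C, eval_one] at hx
  have hx0 : x ≠ 0 := by
    rintro rfl
    simp at hx
  refine ⟨x, hx0, ?_⟩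
  field_simp
  linear_combination hx

/-- For even `d`, a periodic point of `T_d` is `x + x⁻¹` with `x` of odd order, so a large power
of `2` dividing `q - 1` leaves few periodic points beyond those coming from the roots of unity
of order dividing `(q + 1) / 2`. -/
lemma perCount_le {F : Type*} (E : Type*) [Field F] [Finite F] [Field E] [IsAlgClosed E]
    [Algebra F E] (d : ℕ) (hd : Even d) (N : ℕ) (hN : 2 ≤ N)
    (h : 2 ^ N ∣ Nat.card F - 1) :
    ∃ l : ℕ, l * 2 ^ N ≤ Nat.card F ∧
      4 * perCount (dickson 1 1 d : F[X]) ≤ Nat.card F + 5 + 2 * l := by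
  classical
  set q := Nat.card F with hq
  have hq1 : 1 < q := Finite.one_lt_card
  have h4 : 4 ∣ q - 1 := (pow_dvd_pow 2 hN : 2 ^ 2 ∣ 2 ^ N).trans h
  obtain ⟨k, hk⟩ : ∃ k, q + 1 = 2 * k := ⟨(q + 1) / 2, by omega⟩
  have hkodd : Odd k := by rw [Nat.odd_iff]; omega
  obtain ⟨a, l, hl, hal⟩ := Nat.exists_eq_two_pow_mul_odd (show q - 1 ≠ 0 by omega)
  have hNa : N ≤ a := by
    rw [hal] at h
    have := (Nat.Coprime.pow_left N (Nat.coprime_two_left.2 hl)).dvd_of_dvd_mul_right h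
    exact (Nat.pow_dvd_pow_iff_le_right (by norm_num)).1 this
  cases nonempty_fintype F
  have hqE : (q : E) = 0 := by
    rw [hq, Nat.card_eq_fintype_card, ← map_natCast (algebraMap F E), Nat.cast_card_eq_zero,
      map_zero]
  have hkE : (k : E) ≠ 0 := fun h => by
    have : ((q + 1 : ℕ) : E) = ((2 * k : ℕ) : E) := by rw [hk]
    push_cast at this
    rw [hqE, h] at this
    simp at this
  have hlE : (l : E) ≠ 0 := fun h => by
    have : ((q : ℕ) : E) = ((2 ^ a * l + 1 : ℕ) : E) := by rw [← hal, Nat.sub_add_cancel hq1.le]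
    push_cast at this
    rw [hqE, h] at this
    simp at this
  obtain ⟨s, hs, hs'⟩ := exists_finset_add_inv k hkodd hkE
  obtain ⟨t, ht, ht'⟩ := exists_finset_add_inv l hl hlE
  have hsub : algebraMap F E '' {α : F | ∃ m, 1 ≤ m ∧
        (fun x => (dickson 1 1 d : F[X]).eval x)^[m] α = α} ⊆ ((s ∪ t : Finset E) : Set E) := by
    rintro _ ⟨α, ⟨m, hm, hα⟩, rfl⟩
    obtain ⟨x, hx0, hx⟩ := exists_add_inv_eq (algebraMap F E α)
    have hper := congrArg (algebraMap F E) hα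
    rw [algebraMap_dickson_iterate, ← hx, dickson_iterate_s6 d x hx0] at hper
    have hodd : Odd (orderOf x) := by
      have hpp : x ^ (d ^ m * d ^ m) = x := by
        rw [pow_mul]
        rcases eq_or_eq_inv_of_add_inv_eq (pow_ne_zero _ hx0) hx0 hper with h1 | h1
        · rw [h1, h1]
        · rw [h1, inv_pow, h1, inv_inv]
      have hev : Even (d ^ m * d ^ m) := ((hd.pow_of_ne_zero (by omega))).mul_right _
      rcases Nat.eq_zero_or_pos (d ^ m * d ^ m) with h0 | h0
      · rw [h0, pow_zero] at hpp
        simp [← hpp]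
      · have h1 : x ^ (d ^ m * d ^ m - 1) = 1 := by
          have : x ^ (d ^ m * d ^ m - 1) * x = 1 * x := by
            rw [← pow_succ, Nat.sub_add_cancel h0, hpp, one_mul]
          exact mul_right_cancel₀ hx0 this
        refine Odd.of_dvd_nat ?_ (orderOf_dvd_of_pow_eq_one h1)
        exact Nat.Even.sub_odd h0 hev odd_one
    have hfrob : x ^ q + (x ^ q)⁻¹ = x + x⁻¹ := by
      obtain ⟨p, hp⟩ := CharP.exists F
      have := hp
      obtain ⟨n, hpp, hn⟩ := FiniteField.card F p
      have : Fact p.Prime := ⟨hpp⟩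
      have : CharP E p := charP_of_injective_algebraMap (algebraMap F E).injective p
      have : (x + x⁻¹) ^ q = x ^ q + x⁻¹ ^ q := by
        rw [hq, Nat.card_eq_fintype_card, hn]
        exact add_pow_char_pow ..
      rw [← inv_pow, ← this, hx, ← map_pow, hq, Nat.card_eq_fintype_card, FiniteField.pow_card]
    rw [← hx, Finset.mem_coe, Finset.mem_union]
    rcases eq_or_eq_inv_of_add_inv_eq (pow_ne_zero _ hx0) hx0 hfrob with h1 | h1
    · right
      apply ht'
      have h2 : x ^ (q - 1) = 1 := by
        have : x ^ (q - 1) * x = 1 * x := by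
          rw [← pow_succ, Nat.sub_add_cancel hq1.le, h1, one_mul]
        exact mul_right_cancel₀ hx0 this
      rw [hal] at h2
      exact orderOf_dvd_iff_pow_eq_one.1
        ((Nat.Coprime.pow_right a (Nat.coprime_two_right.2 hodd)).dvd_of_dvd_mul_left
          (orderOf_dvd_of_pow_eq_one h2))
    · left
      apply hs'
      have h2 : x ^ (2 * k) = 1 := by
        rw [← hk, pow_succ, h1, inv_mul_cancel₀ hx0]
      exact orderOf_dvd_iff_pow_eq_one.1
        ((Nat.coprime_two_right.2 hodd).dvd_of_dvd_mul_left (orderOf_dvd_of_pow_eq_one h2))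
  have h1 := Set.ncard_le_ncard hsub (Finset.finite_toSet _)
  rw [Set.ncard_image_of_injective _ (algebraMap F E).injective, Set.ncard_coe_finset] at h1
  have h2 : perCount (dickson 1 1 d : F[X]) = Set.ncard {α : F | ∃ m, 1 ≤ m ∧
        (fun x => (dickson 1 1 d : F[X]).eval x)^[m] α = α} := rfl
  have h3 := Finset.card_union_le s t
  refine ⟨l, ?_, by omega⟩
  have h5 : l * 2 ^ N ≤ 2 ^ a * l := by
    rw [mul_comm]
    exact Nat.mul_le_mul_right _ (Nat.pow_le_pow_right (by norm_num) hNa)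
  omega

end FiniteField

/-! ### Norms of primes and roots of unity in a number field -/

section NumberField

variable {K : Type*} [Field K] [NumberField K]

lemma natCard_quotient_eq_absNorm (P : Ideal (𝓞 K)) :
    Nat.card (𝓞 K ⧸ P) = Ideal.absNorm P := by
  rw [Ideal.absNorm_apply, Submodule.cardQuot_apply]

/-- A prime of large norm does not contain the number of roots of unity of `K`, so the roots of
unity inject into its residue field. -/
lemma dvd_absNorm_sub_one {n : ℕ} (hn : 0 < n) {ζ : K} (hζ : IsPrimitiveRoot ζ n)
    (P : Ideal (𝓞 K)) (hP : P.IsPrime) (hP0 : P ≠ ⊥)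
    (hbig : Ideal.absNorm (Ideal.span {((Units.torsionOrder K : ℕ) : 𝓞 K)}) < Ideal.absNorm P) :
    n ∣ Ideal.absNorm P - 1 := by
  have : NeZero n := ⟨hn.ne'⟩
  refine (Units.dvd_torsionOrder_of_isPrimitiveRoot hζ).trans
    (torsionOrder_dvd_absNorm_sub_one hP0 hP ?_)
  set t := Units.torsionOrder K with ht
  have ht0 : (t : 𝓞 K) ≠ 0 := Nat.cast_ne_zero.2 (Units.torsionOrder_ne_zero K)
  have htP : (t : 𝓞 K) ∉ P := fun hmem => by
    have h1 := Ideal.absNorm_dvd_absNorm_of_le ((Ideal.span_singleton_le_iff_mem P).2 hmem)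
    have h2 : 0 < Ideal.absNorm (Ideal.span {(t : 𝓞 K)}) := by
      rw [Nat.pos_iff_ne_zero, Ideal.absNorm_ne_zero_iff_mem_nonZeroDivisors,
        mem_nonZeroDivisors_iff_ne_zero]
      simpa using ht0
    exact absurd (Nat.le_of_dvd h2 h1) (not_le.2 hbig)
  refine Nat.coprime_of_dvd fun p hp hpN hpt => htP ?_
  have : P.IsMaximal := hP.isMaximal hP0
  let := Ideal.Quotient.field P
  have : Finite (𝓞 K ⧸ P) := Ideal.finiteQuotientOfFreeOfNeBot P hP0
  let := Fintype.ofFinite (𝓞 K ⧸ P)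
  obtain ⟨l, hl⟩ := CharP.exists (𝓞 K ⧸ P)
  obtain ⟨r, hlp, hr⟩ := FiniteField.card (𝓞 K ⧸ P) l
  rw [← natCard_quotient_eq_absNorm, Nat.card_eq_fintype_card, hr] at hpN
  have hpl : p = l := (Nat.prime_dvd_prime_iff_eq hp hlp).1 (hp.dvd_of_dvd_pow hpN)
  rw [← Ideal.Quotient.eq_zero_iff_mem, map_natCast, CharP.cast_eq_zero_iff (𝓞 K ⧸ P) l]
  exact hpl ▸ hpt

/-- There are primes of arbitrarily large norm congruent to `1` modulo any given `k`: take
primes above rational primes `p ≡ 1 (mod k)`. -/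
lemma exists_prime_absNorm_s6 (K : Type*) [Field K] [NumberField K] (k : ℕ) (hk : k ≠ 0) (M : ℕ) :
    ∃ P : Ideal (𝓞 K), (P.IsPrime ∧ P ≠ ⊥) ∧ M ≤ Ideal.absNorm P ∧
      k ∣ Ideal.absNorm P - 1 := by
  obtain ⟨p, hp, hMp, hpk⟩ := Nat.exists_prime_gt_modEq_one M hk
  have hnorm : Ideal.absNorm (Ideal.span {(p : 𝓞 K)}) = p ^ Module.finrank ℤ (𝓞 K) := by
    rw [Ideal.absNorm_span_singleton, ← map_natCast (algebraMap ℤ (𝓞 K)) p,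
      Algebra.norm_algebraMap]
    simp [Int.natAbs_pow]
  have hfin : Module.finrank ℤ (𝓞 K) ≠ 0 := by
    rw [RingOfIntegers.rank]
    exact Module.finrank_pos.ne'
  have hne : Ideal.span {(p : 𝓞 K)} ≠ ⊤ := by
    intro h
    rw [h, Ideal.absNorm_top] at hnorm
    exact (Nat.one_lt_pow hfin hp.one_lt).ne hnorm
  obtain ⟨P, hPmax, hP⟩ := Ideal.exists_le_maximal _ hne
  have hpP : (p : 𝓞 K) ∈ P := (Ideal.span_singleton_le_iff_mem P).1 hP
  have hdvd := Ideal.absNorm_dvd_absNorm_of_le hP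
  rw [hnorm] at hdvd
  obtain ⟨f, -, hf⟩ := (Nat.dvd_prime_pow hp).1 hdvd
  have hf0 : f ≠ 0 := by
    rintro rfl
    rw [pow_zero, Ideal.absNorm_eq_one_iff] at hf
    exact hPmax.ne_top hf
  refine ⟨P, ⟨hPmax.isPrime, ?_⟩, ?_, ?_⟩
  · rintro rfl
    rw [Ideal.mem_bot, Nat.cast_eq_zero] at hpP
    exact hp.ne_zero hpP
  · rw [hf]
    exact hMp.le.trans (Nat.le_self_pow hf0 p)
  · rw [hf]
    have h1 : p ^ f ≡ 1 [MOD k] := by simpa using hpk.pow f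
    exact (Nat.modEq_iff_dvd' (Nat.one_le_pow _ _ hp.pos)).1 h1.symm

end NumberField

/-! ### The liminf of the proportion of periodic points -/

theorem perInf_chebyshev_even_rad_dvd_four_dvd (K : Type*) [Field K] [NumberField K]
    (mK : ℕ) (hmK : 0 < mK ∧ (∃ ζ : K, IsPrimitiveRoot ζ mK) ∧
      ∀ m : ℕ, 0 < m → (∃ ζ : K, IsPrimitiveRoot ζ m) → m ≤ mK)
    (d : ℕ) (hd : 2 ≤ d) (heven : Even d) (hnotpp : ¬ IsPrimePow d)
    (hrad : ∀ p : ℕ, p.Prime → p ∣ d → p ∣ mK) (h4 : 4 ∣ mK) :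
    perInf K (Polynomial.dickson 1 1 d : (𝓞 K)[X]) = 1 / 4 := by
  obtain ⟨hm0, ⟨ζ, hζ⟩, -⟩ := hmK
  unfold perInf
  set L := comap (fun 𝔭 : {I : Ideal (𝓞 K) // I.IsPrime ∧ I ≠ ⊥} => Ideal.absNorm 𝔭.1) atTop
    with hL
  set u := fun 𝔭 : {I : Ideal (𝓞 K) // I.IsPrime ∧ I ≠ ⊥} =>
      (perCount ((dickson 1 1 d : (𝓞 K)[X]).map (Ideal.Quotient.mk 𝔭.1)) : ℝ) /
        (Ideal.absNorm 𝔭.1 : ℝ) with hu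
  have hmap : ∀ P : Ideal (𝓞 K), (dickson 1 1 d : (𝓞 K)[X]).map (Ideal.Quotient.mk P) =
      dickson 1 1 d := fun P => by rw [map_dickson, map_one]
  have hlow : ∀ᶠ 𝔭 in L, 1 / 4 ≤ u 𝔭 := by
    filter_upwards [tendsto_comap.eventually (eventually_gt_atTop
      (Ideal.absNorm (Ideal.span {((Units.torsionOrder K : ℕ) : 𝓞 K)})))] with 𝔭 hbig
    have hdvd := dvd_absNorm_sub_one hm0 hζ 𝔭.1 𝔭.2.1 𝔭.2.2 hbig
    have : (𝔭.1).IsMaximal := 𝔭.2.1.isMaximal 𝔭.2.2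
    let := Ideal.Quotient.field 𝔭.1
    have : Finite (𝓞 K ⧸ 𝔭.1) := Ideal.finiteQuotientOfFreeOfNeBot 𝔭.1 𝔭.2.2
    rw [← natCard_quotient_eq_absNorm] at hdvd
    have h := le_perCount (AlgebraicClosure (𝓞 K ⧸ 𝔭.1)) d (h4.trans hdvd)
      (fun p hp hpd => (hrad p hp hpd).trans hdvd)
    have hpos : (0 : ℝ) < Nat.card (𝓞 K ⧸ 𝔭.1) := by exact_mod_cast Nat.card_pos
    simp only [hu]
    rw [hmap, ← natCard_quotient_eq_absNorm, le_div_iff₀ hpos]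
    have h' : (Nat.card (𝓞 K ⧸ 𝔭.1) : ℝ) ≤
        4 * (perCount (dickson 1 1 d : (𝓞 K ⧸ 𝔭.1)[X]) : ℝ) := by exact_mod_cast h
    linarith
  have hfreq : ∀ ε : ℝ, 0 < ε → ∃ᶠ 𝔭 in L, u 𝔭 ≤ 1 / 4 + ε := by
    intro ε hε
    rw [hL, frequently_comap, frequently_atTop]
    intro M
    obtain ⟨N, hN⟩ := exists_pow_lt_of_lt_one hε (show (1 / 2 : ℝ) < 1 by norm_num)
    obtain ⟨R, hR⟩ := exists_nat_gt (5 / ε)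
    obtain ⟨P, hP, hPM, hPk⟩ := exists_prime_absNorm_s6 K (2 ^ (N + 2)) (by positivity) (M + R)
    refine ⟨Ideal.absNorm P, by omega, ⟨P, hP⟩, rfl, ?_⟩
    have : P.IsMaximal := hP.1.isMaximal hP.2
    let := Ideal.Quotient.field P
    have : Finite (𝓞 K ⧸ P) := Ideal.finiteQuotientOfFreeOfNeBot P hP.2
    rw [← natCard_quotient_eq_absNorm] at hPk hPM
    obtain ⟨l, hl, h⟩ := perCount_le (AlgebraicClosure (𝓞 K ⧸ P)) d heven (N + 2) (by omega) hPk
    have hpos : (0 : ℝ) < Nat.card (𝓞 K ⧸ P) := by exact_mod_cast Nat.card_pos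
    simp only [hu]
    rw [hmap, ← natCard_quotient_eq_absNorm, div_le_iff₀ hpos]
    have h' : 4 * (perCount (dickson 1 1 d : (𝓞 K ⧸ P)[X]) : ℝ) ≤
        (Nat.card (𝓞 K ⧸ P) : ℝ) + 5 + 2 * (l : ℝ) := by exact_mod_cast h
    have hl' : (l : ℝ) * 2 ^ (N + 2) ≤ Nat.card (𝓞 K ⧸ P) := by exact_mod_cast hl
    have hl2 : (l : ℝ) ≤ ε * Nat.card (𝓞 K ⧸ P) := by
      have h2 : (1 : ℝ) ≤ ε * 2 ^ (N + 2) := by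
        rw [one_div, inv_pow, inv_lt_iff_one_lt_mul₀ (by positivity)] at hN
        have : (2 : ℝ) ^ (N + 2) = 4 * 2 ^ N := by ring
        rw [this]
        nlinarith
      calc (l : ℝ) ≤ l * (ε * 2 ^ (N + 2)) := le_mul_of_one_le_right (Nat.cast_nonneg _) h2
        _ = ε * (l * 2 ^ (N + 2)) := by ring
        _ ≤ _ := mul_le_mul_of_nonneg_left hl' hε.le
    have hM' : (R : ℝ) ≤ Nat.card (𝓞 K ⧸ P) := by
      exact_mod_cast (by omega : R ≤ Nat.card (𝓞 K ⧸ P))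
    have h5 : 5 ≤ ε * Nat.card (𝓞 K ⧸ P) := by
      rw [div_lt_iff₀ hε] at hR
      nlinarith
    linarith
  have hbdd : L.IsBoundedUnder (· ≥ ·) u := ⟨1 / 4, hlow⟩
  have hcobdd : L.IsCoboundedUnder (· ≥ ·) u :=
    IsCoboundedUnder.of_frequently_le (hfreq 1 one_pos)
  apply le_antisymm
  · exact le_of_forall_pos_le_add fun ε hε => liminf_le_of_frequently_le (hfreq ε hε) hbdd
  · exact le_liminf_of_le hcobdd hlow
end
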